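/- Let L be a ℤ-graded Lie conformal algebra of class 𝒱. Then deg p_{−1,1}(∂) + deg p_{0,1}(λ) ≠ 1. Furthermore: (1) if deg p_{−1,1}(∂) + deg p_{0,1}(λ) = 0, then L is isomorphic to one of Cur sl(2,ℂ), M(1), M(2); (2) if deg p_{−1,1}(∂) + deg p_{0,1}(λ) = 2, then L is isomorphic to one of ECL(s), SCL₂(0,s), CL₂(0,s), CL₃(s) for some s ∈ ℂ. -/

import Mathlib

open scoped BigOperators Classical ENNReal
open Polynomial

noncomputable section

/-- A Lie conformal algebra over `ℂ`, encoded via its `n`-th products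
`a_(n) b` and the operator `∂ = D`.  The `λ`-bracket is
`[a_λ b] = ∑ₙ (λⁿ/n!) • (a_(n) b)`. -/
structure LieConformalAlgebra (L : Type) [AddCommGroup L] [Module ℂ L] : Type where
  D : L →ₗ[ℂ] L
  prd : ℕ → L →ₗ[ℂ] L →ₗ[ℂ] L
  bound : ∀ a b : L, ∃ N : ℕ, ∀ n : ℕ, N ≤ n → prd n a b = 0
  sesq : ∀ (n : ℕ) (a b : L), prd n (D a) b = (-(n : ℂ)) • prd (n - 1) a b
  sesq' : ∀ (n : ℕ) (a b : L),
    prd n a (D b) = D (prd n a b) + (n : ℂ) • prd (n - 1) a b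
  skew : ∀ (n : ℕ) (a b : L),
    prd n a b
      = - ∑ᶠ j : ℕ, ((-1 : ℂ) ^ (n + j) * ((Nat.factorial j : ℂ))⁻¹) • (⇑D)^[j] (prd (n + j) b a)
  jacobi : ∀ (m n : ℕ) (a b c : L),
    prd m a (prd n b c) - prd n b (prd m a c)
      = ∑ j ∈ Finset.range (m + 1), (Nat.choose m j : ℂ) • prd (m + n - j) (prd j a b) c

namespace LieConformalAlgebra

variable {L : Type} [AddCommGroup L] [Module ℂ L]

/-- The action of a polynomial `q(∂) ∈ ℂ[∂]` on an element. -/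
def applyP (C : LieConformalAlgebra L) (q : Polynomial ℂ) (x : L) : L :=
  q.sum fun k c => c • (⇑C.D)^[k] x

/-- `[a_λ b] = p(∂, λ) • t`, where `p ∈ ℂ[∂][λ]` is a two-variable polynomial
(outer variable `λ`, inner variable `∂`). -/
def BracketEq (C : LieConformalAlgebra L) (a b t : L) (p : Polynomial (Polynomial ℂ)) : Prop :=
  ∀ n : ℕ, C.prd n a b = (Nat.factorial n : ℂ) • C.applyP (p.coeff n) t

def IsSubalgebra (C : LieConformalAlgebra L) (N : Submodule ℂ L) : Prop :=
  (∀ x ∈ N, C.D x ∈ N) ∧ ∀ n : ℕ, ∀ a ∈ N, ∀ b ∈ N, C.prd n a b ∈ N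

def IsIdeal (C : LieConformalAlgebra L) (N : Submodule ℂ L) : Prop :=
  (∀ x ∈ N, C.D x ∈ N) ∧ ∀ (n : ℕ) (a : L), ∀ b ∈ N, C.prd n a b ∈ N

/-- `L` is finitely generated as a Lie conformal algebra (finite type). -/
def FiniteType (C : LieConformalAlgebra L) : Prop :=
  ∃ s : Finset L, ∀ N : Submodule ℂ L, C.IsSubalgebra N → (s : Set L) ⊆ (N : Set L) → N = ⊤

/-- `L` is finitely generated as a `ℂ[∂]`-module. -/
def FGPolyModule (C : LieConformalAlgebra L) : Prop :=
  ∃ s : Finset L, ∀ N : Submodule ℂ L, (∀ x ∈ N, C.D x ∈ N) → (s : Set L) ⊆ (N : Set L) → N = ⊤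

/-- Iterated adjoint action `a₁_(k₁)(a₂_(k₂)(⋯ x))`. -/
def iterPrd (C : LieConformalAlgebra L) : List (L × ℕ) → L → L
  | [], x => x
  | (a, k) :: t, x => C.prd k a (iterPrd C t x)

/-- The `ℂ[∂]`-rank of the submodule `N` is at most `r`:
any `r+1` elements of `N` are `ℂ[∂]`-linearly dependent. -/
def polyRankLE (C : LieConformalAlgebra L) (N : Submodule ℂ L) (r : ℕ) : Prop :=
  ∀ v : Fin (r + 1) → L, (∀ k, v k ∈ N) →
    ∃ q : Fin (r + 1) → Polynomial ℂ, (∃ k, q k ≠ 0) ∧ ∑ k, C.applyP (q k) (v k) = 0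

/-- The family `v` is a free `ℂ[∂]`-basis of `L`. -/
def IsFreePolyBasis (C : LieConformalAlgebra L) {ι : Type} (v : ι → L) : Prop :=
  LinearIndependent ℂ (fun q : ι × ℕ => (⇑C.D)^[q.2] (v q.1)) ∧
  Submodule.span ℂ (Set.range fun q : ι × ℕ => (⇑C.D)^[q.2] (v q.1)) = ⊤

/-- `[U_λ V]`: the `ℂ`-span of all `u_(n) v`. -/
def bspan (C : LieConformalAlgebra L) (U V : Set L) : Submodule ℂ L :=
  Submodule.span ℂ {x : L | ∃ (n : ℕ) (u : L) (w : L), u ∈ U ∧ w ∈ V ∧ x = C.prd n u w}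

end LieConformalAlgebra

/-- `∂` as an element of `ℂ[∂][λ]`. -/
def Pd : Polynomial (Polynomial ℂ) := Polynomial.C Polynomial.X
/-- `λ` as an element of `ℂ[∂][λ]`. -/
def Pl : Polynomial (Polynomial ℂ) := Polynomial.X
/-- a constant in `ℂ[∂][λ]`. -/
def Pc (a : ℂ) : Polynomial (Polynomial ℂ) := Polynomial.C (Polynomial.C a)

/-- Total degree of a two-variable polynomial in `ℂ[∂][λ]`. -/
def tdeg (p : Polynomial (Polynomial ℂ)) : ℕ :=
  p.support.sup fun n => n + (p.coeff n).natDegree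

section ModelPolynomials

/-- structure polynomials of `𝒱(s)` -/
def pV (s : ℂ) (i j : ℤ) : Polynomial (Polynomial ℂ) :=
  Pd + Pc 2 * Pl + Pc (s * ((i : ℂ) - (j : ℂ)))

/-- structure polynomials of `CL₁(s)` -/
def pCL1 (s : ℂ) (i j : ℤ) : Polynomial (Polynomial ℂ) :=
  Pc ((i : ℂ) + 1) * Pd + Pc ((i : ℂ) + (j : ℂ) + 2) * Pl + Pc (s * ((i : ℂ) - (j : ℂ)))

/-- structure polynomials of `CL₂(b,s)` -/
def pCL2 (b s : ℂ) (i j : ℤ) : Polynomial (Polynomial ℂ) :=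
  Pc ((i : ℂ) + b) * Pd + Pc ((i : ℂ) + (j : ℂ) + 2 * b) * Pl + Pc (s * ((i : ℂ) - (j : ℂ)))

/-- structure polynomials of `SCL₂(b,s)` (for `2b ∈ ℤ`), w.r.t. the basis
`L'ᵢ = Lᵢ (i ≠ -2b)`, `L'_{-2b} = (∂+2s)L_{-2b}` of the corresponding graded
subalgebra of `CL₂(b,s)`. -/
def pSCL2 (b s : ℂ) (i j : ℤ) : Polynomial (Polynomial ℂ) :=
  (if (i : ℂ) = -(2 * b) then Pc (2 * s) - Pl else 1) *
  (if (j : ℂ) = -(2 * b) then Pd + Pl + Pc (2 * s) else 1) *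
  (if (i : ℂ) + (j : ℂ) = -(2 * b) then Pc ((i : ℂ) + b) else pCL2 b s i j)

/-- structure polynomials of `CL₃(s)` -/
def pCL3 (s : ℂ) (i j : ℤ) : Polynomial (Polynomial ℂ) :=
  if i + j = 0 then Pc (i : ℂ) * (Pd + Pc s)
  else if i = 0 then Pc (-(j : ℂ)) * (Pc (2 * s) - Pl)
  else if j = 0 then Pc (i : ℂ) * (Pd + Pl + Pc (2 * s))
  else Pc (i : ℂ) * Pd + Pc ((i : ℂ) + (j : ℂ)) * Pl + Pc (s * ((i : ℂ) - (j : ℂ)))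

/-- structure polynomials of `ECL(s)` -/
def pECL (s : ℂ) (i j : ℤ) : Polynomial (Polynomial ℂ) :=
  if i + j = 0 then Pc (i : ℂ) * (Pd + Pc s) * (Pd + Pc (2 * s))
  else if i = 0 then Pc (-(j : ℂ))
  else if j = 0 then Pc (i : ℂ)
  else Pc (i : ℂ) * Pd + Pc ((i : ℂ) + (j : ℂ)) * Pl + Pc (s * ((i : ℂ) - (j : ℂ)))

/-- structure polynomials of `M(1)` (indices `≥ -1`, completed by skew-symmetry) -/
def pM1 (i j : ℤ) : Polynomial (Polynomial ℂ) :=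
  if i = 1 ∧ j = 1 then Pd + Pc 2 * Pl
  else if i = -1 ∧ 1 ≤ j then Pc (((j : ℂ) + 1) * ((j : ℂ) - 2) / 2)
  else if j = -1 ∧ 1 ≤ i then Pc (-(((i : ℂ) + 1) * ((i : ℂ) - 2) / 2))
  else if i = 0 then Pc (-(j : ℂ))
  else if j = 0 then Pc (i : ℂ)
  else if i = 1 ∧ 2 ≤ j then 1
  else if j = 1 ∧ 2 ≤ i then -1
  else 0

/-- structure polynomials of `M(2)` (completed by skew-symmetry) -/
def pM2 (i j : ℤ) : Polynomial (Polynomial ℂ) :=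
  if i = 1 ∧ j = 1 then Pd + Pc 2 * Pl
  else if i = -1 ∧ j = -1 then Pd + Pc 2 * Pl
  else if i = 0 then Pc (-(j : ℂ))
  else if j = 0 then Pc (i : ℂ)
  else if i = -1 ∧ 1 ≤ j then Pc (((j : ℂ) + 1) * ((j : ℂ) - 2) / 2)
  else if j = -1 ∧ 1 ≤ i then Pc (-(((i : ℂ) + 1) * ((i : ℂ) - 2) / 2))
  else if i = 1 ∧ j ≤ -2 then Pc (((j : ℂ) - 1) * ((j : ℂ) + 2) / 2)
  else if j = 1 ∧ i ≤ -2 then Pc (-(((i : ℂ) - 1) * ((i : ℂ) + 2) / 2))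
  else if i = -1 ∧ j ≤ -2 then 1
  else if j = -1 ∧ i ≤ -2 then -1
  else if i = 1 ∧ 2 ≤ j then 1
  else if j = 1 ∧ 2 ≤ i then -1
  else 0

end ModelPolynomials

namespace LieConformalAlgebra

variable {L : Type} [AddCommGroup L] [Module ℂ L]

/-- `C` is isomorphic to the Virasoro Lie conformal algebra. -/
def IsVir (C : LieConformalAlgebra L) : Prop :=
  ∃ e : L, C.IsFreePolyBasis (fun _ : Unit => e) ∧ C.BracketEq e e e (Pd + Pc 2 * Pl)

/-- `C` is isomorphic to the loop Virasoro Lie conformal algebra `𝒱(s)`. -/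
def IsV (C : LieConformalAlgebra L) (s : ℂ) : Prop :=
  ∃ v : ℤ → L, C.IsFreePolyBasis v ∧
    ∀ i j : ℤ, C.BracketEq (v i) (v j) (v (i + j)) (pV s i j)

/-- `C` is isomorphic to `CL₁(s)`. -/
def IsCL1 (C : LieConformalAlgebra L) (s : ℂ) : Prop :=
  ∃ v : ℤ → L, C.IsFreePolyBasis (fun q : {i : ℤ // -1 ≤ i} => v q.1) ∧
    ∀ i j : ℤ, -1 ≤ i → -1 ≤ j →
      C.BracketEq (v i) (v j) (if -1 ≤ i + j then v (i + j) else 0) (pCL1 s i j)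

/-- `C` is isomorphic to `CL₂(b,s)`. -/
def IsCL2 (C : LieConformalAlgebra L) (b s : ℂ) : Prop :=
  ∃ v : ℤ → L, C.IsFreePolyBasis v ∧
    ∀ i j : ℤ, C.BracketEq (v i) (v j) (v (i + j)) (pCL2 b s i j)

/-- `C` is isomorphic to `SCL₂(b,s)`. -/
def IsSCL2 (C : LieConformalAlgebra L) (b s : ℂ) : Prop :=
  ∃ v : ℤ → L, C.IsFreePolyBasis v ∧
    ∀ i j : ℤ, C.BracketEq (v i) (v j) (v (i + j)) (pSCL2 b s i j)

/-- `C` is isomorphic to `CL₃(s)`. -/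
def IsCL3 (C : LieConformalAlgebra L) (s : ℂ) : Prop :=
  ∃ v : ℤ → L, C.IsFreePolyBasis v ∧
    ∀ i j : ℤ, C.BracketEq (v i) (v j) (v (i + j)) (pCL3 s i j)

/-- `C` is isomorphic to `ECL(s)`. -/
def IsECL (C : LieConformalAlgebra L) (s : ℂ) : Prop :=
  ∃ v : ℤ → L, C.IsFreePolyBasis v ∧
    ∀ i j : ℤ, C.BracketEq (v i) (v j) (v (i + j)) (pECL s i j)

/-- `C` is isomorphic to `M(1)`. -/
def IsM1 (C : LieConformalAlgebra L) : Prop :=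
  ∃ v : ℤ → L, C.IsFreePolyBasis (fun q : {i : ℤ // -1 ≤ i} => v q.1) ∧
    ∀ i j : ℤ, -1 ≤ i → -1 ≤ j →
      C.BracketEq (v i) (v j) (if -1 ≤ i + j then v (i + j) else 0) (pM1 i j)

/-- `C` is isomorphic to `M(2)`. -/
def IsM2 (C : LieConformalAlgebra L) : Prop :=
  ∃ v : ℤ → L, C.IsFreePolyBasis v ∧
    ∀ i j : ℤ, C.BracketEq (v i) (v j) (v (i + j)) (pM2 i j)

/-- `C` is isomorphic to the current Lie conformal algebra `Cur 𝔤`. -/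
def IsCur (C : LieConformalAlgebra L) (g : Type) [LieRing g] [LieAlgebra ℂ g] : Prop :=
  ∃ φ : g →ₗ[ℂ] L,
    Function.Bijective (fun f : ℕ →₀ g => f.sum fun k x => (⇑C.D)^[k] (φ x)) ∧
    (∀ x y : g, C.prd 0 (φ x) (φ y) = φ ⁅x, y⁆) ∧
    ∀ n : ℕ, 1 ≤ n → ∀ x y : g, C.prd n (φ x) (φ y) = 0

/-- `C ≅ Cur sl(2,ℂ)`. -/
def IsCurSl2 (C : LieConformalAlgebra L) : Prop :=
  C.IsCur ↥(LieAlgebra.SpecialLinear.sl (Fin 2) ℂ)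

/-- `C ≅ Cur 𝒲`, `𝒲` the Witt algebra (basis `wᵢ`, `[wᵢ,wⱼ] = (j-i)w_{i+j}`). -/
def IsCurWitt (C : LieConformalAlgebra L) : Prop :=
  ∃ v : ℤ → L, C.IsFreePolyBasis v ∧
    (∀ i j : ℤ, C.prd 0 (v i) (v j) = (((j : ℂ) - (i : ℂ))) • v (i + j)) ∧
    ∀ n : ℕ, 1 ≤ n → ∀ i j : ℤ, C.prd n (v i) (v j) = 0

/-- `C ≅ Cur 𝒲₁`, `𝒲₁` spanned by the `wᵢ`, `i ≥ -1`. -/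
def IsCurWitt1 (C : LieConformalAlgebra L) : Prop :=
  ∃ v : ℤ → L, C.IsFreePolyBasis (fun q : {i : ℤ // -1 ≤ i} => v q.1) ∧
    (∀ i j : ℤ, -1 ≤ i → -1 ≤ j →
      C.prd 0 (v i) (v j) = (((j : ℂ) - (i : ℂ))) • (if -1 ≤ i + j then v (i + j) else 0)) ∧
    ∀ n : ℕ, 1 ≤ n → ∀ i j : ℤ, -1 ≤ i → -1 ≤ j → C.prd n (v i) (v j) = 0

end LieConformalAlgebra

/-- A `ℤ`-graded Lie conformal algebra. -/
structure GradedLCA (L : Type) [AddCommGroup L] [Module ℂ L]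
    extends LieConformalAlgebra L where
  G : ℤ → Submodule ℂ L
  internal : DirectSum.IsInternal G
  dGrade : ∀ i : ℤ, ∀ x ∈ G i, D x ∈ G i
  prdGrade : ∀ (i j : ℤ) (n : ℕ), ∀ a ∈ G i, ∀ b ∈ G j, prd n a b ∈ G (i + j)

namespace GradedLCA

variable {L : Type} [AddCommGroup L] [Module ℂ L]

/-- A graded ideal: an ideal generated by homogeneous elements. -/
def IsGradedIdeal (C : GradedLCA L) (N : Submodule ℂ L) : Prop :=
  C.toLieConformalAlgebra.IsIdeal N ∧ (⨆ i : ℤ, N ⊓ C.G i) = N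

/-- `L` is simple graded: nonzero bracket, and the only graded ideals are `⊥` and `⊤`. -/
def IsSimpleGraded (C : GradedLCA L) : Prop :=
  (∃ (n : ℕ) (a b : L), C.prd n a b ≠ 0) ∧
  ∀ N : Submodule ℂ L, C.IsGradedIdeal N → N = ⊥ ∨ N = ⊤

/-- `[L_λ L] = L`. -/
def Perfect (C : GradedLCA L) : Prop :=
  Submodule.span ℂ {x : L | ∃ (n : ℕ) (a b : L), x = C.prd n a b} = ⊤

/-- Each component `L_i` is a nilpotent `L₀`-module under the adjoint action. -/
def Rootless (C : GradedLCA L) : Prop :=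
  ∀ i : ℤ, ∃ n : ℕ, 1 ≤ n ∧ ∀ l : List (L × ℕ), l.length = n →
    (∀ q ∈ l, q.1 ∈ C.G 0) → ∀ x ∈ C.G i, C.toLieConformalAlgebra.iterPrd l x = 0

/-- The ranks of the components are uniformly bounded. -/
def UniformlyBounded (C : GradedLCA L) : Prop :=
  ∃ N : ℕ, 1 ≤ N ∧ ∀ i : ℤ, C.toLieConformalAlgebra.polyRankLE (C.G i) N

end GradedLCA

/-- A module over a Lie conformal algebra, encoded via the `n`-th actions. -/
structure LCAModule {L : Type} [AddCommGroup L] [Module ℂ L] (C : LieConformalAlgebra L)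
    (M : Type) [AddCommGroup M] [Module ℂ M] : Type where
  DM : M →ₗ[ℂ] M
  act : ℕ → L →ₗ[ℂ] M →ₗ[ℂ] M
  bound : ∀ (a : L) (m : M), ∃ N : ℕ, ∀ n : ℕ, N ≤ n → act n a m = 0
  sesq : ∀ (n : ℕ) (a : L) (m : M), act n (C.D a) m = (-(n : ℂ)) • act (n - 1) a m
  sesq' : ∀ (n : ℕ) (a : L) (m : M),
    act n a (DM m) = DM (act n a m) + (n : ℂ) • act (n - 1) a m
  comm : ∀ (p q : ℕ) (a b : L) (m : M),
    act p a (act q b m) - act q b (act p a m)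
      = ∑ j ∈ Finset.range (p + 1), (Nat.choose p j : ℂ) • act (p + q - j) (C.prd j a b) m

namespace LCAModule

variable {L : Type} [AddCommGroup L] [Module ℂ L] {C : LieConformalAlgebra L}
variable {M : Type} [AddCommGroup M] [Module ℂ M]

/-- Iterated action `a₁_(k₁)(a₂_(k₂)(⋯ m))`. -/
def iterAct (ρ : LCAModule C M) : List (L × ℕ) → M → M
  | [], m => m
  | (a, k) :: t, m => ρ.act k a (iterAct ρ t m)

/-- `N` is an `L`-submodule of `M`. -/
def IsSub (ρ : LCAModule C M) (N : Submodule ℂ M) : Prop :=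
  (∀ m ∈ N, ρ.DM m ∈ N) ∧ ∀ (n : ℕ) (a : L), ∀ m ∈ N, ρ.act n a m ∈ N

/-- `M` is a nilpotent module. -/
def Nilpotent (ρ : LCAModule C M) : Prop :=
  ∃ n : ℕ, 1 ≤ n ∧ ∀ l : List (L × ℕ), l.length = n → ∀ m : M, ρ.iterAct l m = 0

/-- `M` is finitely generated as an `L`-module. -/
def FG (ρ : LCAModule C M) : Prop :=
  ∃ s : Finset M, ∀ N : Submodule ℂ M, ρ.IsSub N → (s : Set M) ⊆ (N : Set M) → N = ⊤

/-- The `L`-submodule `N` is finitely generated as an `L`-module. -/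
def FGIn (ρ : LCAModule C M) (N : Submodule ℂ M) : Prop :=
  ∃ s : Finset M, (s : Set M) ⊆ (N : Set M) ∧
    ∀ P : Submodule ℂ M, ρ.IsSub P → (s : Set M) ⊆ (P : Set M) → N ≤ P

/-- `M` is finitely generated as a `ℂ[∂]`-module. -/
def FGPoly (ρ : LCAModule C M) : Prop :=
  ∃ s : Finset M, ∀ N : Submodule ℂ M, (∀ m ∈ N, ρ.DM m ∈ N) → (s : Set M) ⊆ (N : Set M) → N = ⊤

end LCAModule

/-- A family is `ℂ[∂]`-linearly independent. -/
def polyIndep {M : Type} [AddCommGroup M] [Module ℂ M] (DM : M →ₗ[ℂ] M)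
    {r : ℕ} (v : Fin r → M) : Prop :=
  ∀ q : Fin r → Polynomial ℂ,
    (∑ k, (q k).sum fun t c => c • (⇑DM)^[t] (v k)) = 0 → ∀ k, q k = 0

/-- The `ℂ[∂]`-rank of a submodule, in `ℕ∞`. -/
def polyRank {M : Type} [AddCommGroup M] [Module ℂ M] (DM : M →ₗ[ℂ] M)
    (N : Submodule ℂ M) : ℕ∞ :=
  ⨆ r ∈ {r : ℕ | ∃ v : Fin r → M, (∀ k, v k ∈ N) ∧ polyIndep DM v}, (r : ℕ∞)

/-- A graded module over a `ℤ`-graded Lie conformal algebra. -/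
structure GradedLCAModule {L : Type} [AddCommGroup L] [Module ℂ L] (C : GradedLCA L)
    (M : Type) [AddCommGroup M] [Module ℂ M]
    extends LCAModule C.toLieConformalAlgebra M where
  GM : ℤ → Submodule ℂ M
  internal : DirectSum.IsInternal GM
  dGrade : ∀ i : ℤ, ∀ m ∈ GM i, DM m ∈ GM i
  actGrade : ∀ (i j : ℤ) (n : ℕ), ∀ a ∈ C.G i, ∀ m ∈ GM j, act n a m ∈ GM (i + j)

namespace GradedLCAModule

variable {L : Type} [AddCommGroup L] [Module ℂ L] {C : GradedLCA L}
variable {M : Type} [AddCommGroup M] [Module ℂ M]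

/-- `Mⁿ = ⊕_{|i| ≤ n} M_i`. -/
def seg (ρ : GradedLCAModule C M) (n : ℕ) : Submodule ℂ M :=
  ⨆ i : ℤ, ⨆ _ : |i| ≤ (n : ℤ), ρ.GM i

/-- `e(M) = liminf (1/n) rank_{ℂ[∂]} Mⁿ`. -/
def eM (ρ : GradedLCAModule C M) : ℝ≥0∞ :=
  Filter.atTop.liminf fun n : ℕ => (polyRank ρ.DM (ρ.seg n) : ℝ≥0∞) / (n : ℝ≥0∞)

/-- Each `M_i` is a nilpotent `L₀`-module. -/
def Weightless (ρ : GradedLCAModule C M) : Prop :=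
  ∀ i : ℤ, ∃ n : ℕ, 1 ≤ n ∧ ∀ l : List (L × ℕ), l.length = n →
    (∀ q ∈ l, q.1 ∈ C.G 0) → ∀ m ∈ ρ.GM i, ρ.toLCAModule.iterAct l m = 0

/-- The submodule `I(M)` generated by all homogeneous `v` lying in the span of
the iterated actions of `L` on `v`. -/
def IM (ρ : GradedLCAModule C M) : Submodule ℂ M :=
  sInf {N : Submodule ℂ M | ρ.toLCAModule.IsSub N ∧
    {v : M | (∃ i : ℤ, v ∈ ρ.GM i) ∧
      v ∈ Submodule.span ℂ
        {w : M | ∃ l : List (L × ℕ), 1 ≤ l.length ∧ w = ρ.toLCAModule.iterAct l v}} ⊆ N}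

end GradedLCAModule

/-- The structure context for graded Lie conformal algebras all of whose
nonzero components are free of rank one over `ℂ[∂]`: fixed homogeneous bases
`bas i` and structure polynomials `sp i j ∈ ℂ[∂][λ]`, with `0 ∈ Supp(L)` and
`L₀` abelian. -/
structure RankOneContext (L : Type) [AddCommGroup L] [Module ℂ L]
    extends GradedLCA L where
  bas : ℤ → L
  sp : ℤ → ℤ → Polynomial (Polynomial ℂ)
  bas_mem : ∀ i : ℤ, bas i ∈ G i
  bas_zero : ∀ i : ℤ, G i = ⊥ → bas i = 0
  bas_indep : ∀ i : ℤ, G i ≠ ⊥ → LinearIndependent ℂ fun k : ℕ => (⇑D)^[k] (bas i)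
  bas_span : ∀ i : ℤ, G i ≠ ⊥ →
    G i = Submodule.span ℂ (Set.range fun k : ℕ => (⇑D)^[k] (bas i))
  sp_brkt : ∀ (i j : ℤ) (n : ℕ),
    prd n (bas i) (bas j)
      = (Nat.factorial n : ℂ) • (((sp i j).coeff n).sum fun k c => c • (⇑D)^[k] (bas (i + j)))
  sp_zero : ∀ i j : ℤ, (G i = ⊥ ∨ G j = ⊥ ∨ G (i + j) = ⊥) → sp i j = 0
  supp_zero : G 0 ≠ ⊥
  abelian0 : ∀ n : ℕ, ∀ x ∈ G 0, ∀ y ∈ G 0, prd n x y = 0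

/-- A Lie conformal algebra of class `𝒱`. -/
structure ClassV (L : Type) [AddCommGroup L] [Module ℂ L]
    extends RankOneContext L where
  supp_one : G 1 ≠ ⊥
  supp_negone : G (-1) ≠ ⊥
  genV : ∀ N : Submodule ℂ L, (∀ x ∈ N, D x ∈ N) →
    (∀ n : ℕ, ∀ a ∈ N, ∀ b ∈ N, prd n a b ∈ N) →
    G 1 ≤ N → G 0 ≤ N → G (-1) ≤ N → N = ⊤
  ne_m11 : sp (-1) 1 ≠ 0
  ne_01 : sp 0 1 ≠ 0


namespace CV

theorem sum_anti {M : Type*} [AddCommMonoid M] (N : ℕ) (φ : ℕ → ℕ → M)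
    (h : ∀ i j, N ≤ i + j → φ i j = 0) :
    ∑ m ∈ Finset.range N, ∑ k ∈ Finset.range (m + 1), φ k (m - k)
      = ∑ i ∈ Finset.range N, ∑ j ∈ Finset.range N, φ i j := by
  rw [Finset.sum_range_diag_flip]
  apply Finset.sum_congr rfl
  intro i hi
  apply Finset.sum_subset
  · intro j hj; simp at *; omega
  · intro j hj hj'; apply h; simp at *; omega

variable {L : Type} [AddCommGroup L] [Module ℂ L]

def br0 (C : LieConformalAlgebra L) (l : ℂ) (a b : L) : L :=
  ∑ᶠ n : ℕ, (l ^ n * ((n.factorial : ℂ))⁻¹) • C.prd n a b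

theorem br0_eq (C : LieConformalAlgebra L) (l : ℂ) (a b : L) (N : ℕ)
    (h : ∀ n, N ≤ n → C.prd n a b = 0) :
    br0 C l a b = ∑ n ∈ Finset.range N, (l ^ n * ((n.factorial : ℂ))⁻¹) • C.prd n a b := by
  unfold br0
  apply finsum_eq_sum_of_support_subset
  intro n hn
  by_contra hc
  simp at hc
  exact hn (by simp [h n hc])

theorem bound2 (C : LieConformalAlgebra L) (a b a' b' : L) :
    ∃ N, ∀ n, N ≤ n → C.prd n a b = 0 ∧ C.prd n a' b' = 0 := by
  obtain ⟨N, hN⟩ := C.bound a b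
  obtain ⟨N', hN'⟩ := C.bound a' b'
  exact ⟨max N N', fun n hn => ⟨hN n (le_trans (le_max_left _ _) hn), hN' n (le_trans (le_max_right _ _) hn)⟩⟩

def br (C : LieConformalAlgebra L) (l : ℂ) : L →ₗ[ℂ] L →ₗ[ℂ] L :=
  LinearMap.mk₂ ℂ (br0 C l)
    (by
      intro a a' b
      obtain ⟨N, hN⟩ := bound2 C a b a' b
      rw [br0_eq C l a b N (fun n hn => (hN n hn).1), br0_eq C l a' b N (fun n hn => (hN n hn).2),
        br0_eq C l (a + a') b N (fun n hn => by simp [(hN n hn).1, (hN n hn).2]), ← Finset.sum_add_distrib]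
      simp)
    (by
      intro c a b
      obtain ⟨N, hN⟩ := C.bound a b
      rw [br0_eq C l a b N hN, br0_eq C l (c • a) b N (fun n hn => by simp [hN n hn]), Finset.smul_sum]
      apply Finset.sum_congr rfl
      intro n _
      simp [smul_comm c])
    (by
      intro a b b'
      obtain ⟨N, hN⟩ := bound2 C a b a b'
      rw [br0_eq C l a b N (fun n hn => (hN n hn).1), br0_eq C l a b' N (fun n hn => (hN n hn).2),
        br0_eq C l a (b + b') N (fun n hn => by simp [(hN n hn).1, (hN n hn).2]), ← Finset.sum_add_distrib]
      simp)
    (by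
      intro c a b
      obtain ⟨N, hN⟩ := C.bound a b
      rw [br0_eq C l a b N hN, br0_eq C l a (c • b) N (fun n hn => by simp [hN n hn]), Finset.smul_sum]
      apply Finset.sum_congr rfl
      intro n _
      simp [smul_comm c])

theorem br_eq (C : LieConformalAlgebra L) (l : ℂ) (a b : L) (N : ℕ)
    (h : ∀ n, N ≤ n → C.prd n a b = 0) :
    br C l a b = ∑ n ∈ Finset.range N, (l ^ n * ((n.factorial : ℂ))⁻¹) • C.prd n a b :=
  br0_eq C l a b N h

theorem fact_shift (l : ℂ) (n : ℕ) :
    l ^ (n+1) * (((n+1).factorial : ℂ))⁻¹ * ((n+1 : ℕ) : ℂ) = l * (l ^ n * ((n.factorial : ℂ))⁻¹) := by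
  have h1 : ((n.factorial : ℂ)) ≠ 0 := by exact_mod_cast n.factorial_ne_zero
  have h2 : ((n:ℂ) + 1) ≠ 0 := by exact_mod_cast n.succ_ne_zero
  rw [Nat.factorial_succ]; push_cast
  field_simp
  ring

theorem br_D_left (C : LieConformalAlgebra L) (l : ℂ) (a b : L) :
    br C l (C.D a) b = (-l) • br C l a b := by
  obtain ⟨N, hN⟩ := C.bound a b
  rw [br_eq C l a b N hN, br_eq C l (C.D a) b (N + 1), Finset.sum_range_succ', Finset.smul_sum]
  · rw [C.sesq]
    simp only [Nat.cast_zero, neg_zero, zero_smul, smul_zero, add_zero]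
    apply Finset.sum_congr rfl
    intro n _
    rw [C.sesq, smul_smul, smul_smul, mul_neg, fact_shift]
    simp
  · intro n hn
    rw [C.sesq, hN _ (by omega), smul_zero]

theorem br_D_right (C : LieConformalAlgebra L) (l : ℂ) (a b : L) :
    br C l a (C.D b) = C.D (br C l a b) + l • br C l a b := by
  obtain ⟨N, hN⟩ := C.bound a b
  have e1 := br_eq C l a b N hN
  have e2 := br_eq C l a b (N+1) (fun n hn => hN n (by omega))
  have e3 := br_eq C l a (C.D b) (N + 1) (by
    intro n hn
    rw [C.sesq', hN _ (by omega), hN _ (by omega), smul_zero, map_zero, add_zero])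
  have e4 : br C l a (C.D b) = C.D (br C l a b) + ∑ n ∈ Finset.range (N+1), (l ^ n * ((n.factorial : ℂ))⁻¹ * (n:ℂ)) • C.prd (n-1) a b := by
    rw [e3, e2, map_sum, ← Finset.sum_add_distrib]
    apply Finset.sum_congr rfl
    intro n _
    rw [C.sesq', smul_add, map_smul, smul_smul]
  rw [e4]
  congr 1
  rw [Finset.sum_range_succ', e1, Finset.smul_sum]
  simp only [Nat.cast_zero, mul_zero, zero_smul, add_zero]
  apply Finset.sum_congr rfl
  intro n _
  rw [fact_shift, smul_smul]; simp

theorem br_poly_left (C : LieConformalAlgebra L) (l : ℂ) (q : ℂ[X]) (a b : L) :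
    br C l (aeval C.D q a) b = (q.eval (-l)) • br C l a b := by
  induction q using Polynomial.induction_on' generalizing a with
  | add p q hp hq => simp [hp, hq, add_smul]
  | monomial n c =>
    induction n generalizing a c with
    | zero => simp [Module.algebraMap_end_apply]
    | succ n ih =>
      have : aeval C.D (monomial (n+1) c) a = aeval C.D (monomial n c) (C.D a) := by
        simp [aeval_monomial, pow_succ]
      rw [this, ih, br_D_left, smul_smul]
      simp [pow_succ]; ring_nf

theorem br_poly_right (C : LieConformalAlgebra L) (l : ℂ) (q : ℂ[X]) (a b : L) :
    br C l a (aeval C.D q b) = aeval C.D (q.comp (X + Polynomial.C l)) (br C l a b) := by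
  induction q using Polynomial.induction_on' generalizing b with
  | add p q hp hq => simp [hp, hq]
  | monomial n c =>
    induction n generalizing b c with
    | zero => simp [Module.algebraMap_end_apply]
    | succ n ih =>
      have : aeval C.D (monomial (n+1) c) b = aeval C.D (monomial n c) (C.D b) := by
        simp [aeval_monomial, pow_succ]
      rw [this, ih, br_D_right]
      have : C.D ((br C l) a b) + l • (br C l) a b = aeval C.D (X + Polynomial.C l) (br C l a b) := by
        simp [Module.algebraMap_end_apply]
      rw [this, ← Module.End.mul_apply, ← map_mul]
      simp [pow_succ, mul_assoc]

theorem br_jacobi (C : LieConformalAlgebra L) (l m : ℂ) (a b c : L) :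
    br C l a (br C m b c) = br C (l + m) (br C l a b) c + br C m b (br C l a c) := by
  obtain ⟨N1, h1⟩ := C.bound a b
  obtain ⟨N2, h2⟩ := C.bound b c
  obtain ⟨N3, h3⟩ := C.bound a c
  choose M1 k1 using fun j => C.bound (C.prd j a b) c
  choose M2 k2 using fun n => C.bound a (C.prd n b c)
  choose M3 k3 using fun n => C.bound b (C.prd n a c)
  set N := N1 + N2 + N3 + (∑ j ∈ Finset.range N1, M1 j) + (∑ j ∈ Finset.range N2, M2 j)
    + (∑ j ∈ Finset.range N3, M3 j) with hN
  have g1 : ∀ j k, N ≤ j ∨ N ≤ k → C.prd k (C.prd j a b) c = 0 := by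
    intro j k hjk
    by_cases hj : N1 ≤ j
    · rw [h1 j hj]; simp
    · apply k1
      have := Finset.single_le_sum (f := M1) (fun _ _ => Nat.zero_le _) (Finset.mem_range.2 (not_le.1 hj))
      omega
  have g2 : ∀ j k, N ≤ j ∨ N ≤ k → C.prd k a (C.prd j b c) = 0 := by
    intro j k hjk
    by_cases hj : N2 ≤ j
    · rw [h2 j hj]; simp
    · apply k2
      have := Finset.single_le_sum (f := M2) (fun _ _ => Nat.zero_le _) (Finset.mem_range.2 (not_le.1 hj))
      omega
  have g3 : ∀ j k, N ≤ j ∨ N ≤ k → C.prd k b (C.prd j a c) = 0 := by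
    intro j k hjk
    by_cases hj : N3 ≤ j
    · rw [h3 j hj]; simp
    · apply k3
      have := Finset.single_le_sum (f := M3) (fun _ _ => Nat.zero_le _) (Finset.mem_range.2 (not_le.1 hj))
      omega
  set R := Finset.range (2 * N) with hR
  have e1 : br C l a (br C m b c) = ∑ p ∈ R, ∑ n ∈ R,
      (l ^ p * ((p.factorial : ℂ))⁻¹ * (m ^ n * ((n.factorial : ℂ))⁻¹)) • C.prd p a (C.prd n b c) := by
    rw [br_eq C m b c (2 * N) (fun n hn => h2 n (by omega)), map_sum, Finset.sum_comm]
    apply Finset.sum_congr rfl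
    intro n _
    rw [map_smul, br_eq C l a _ (2 * N) (fun k hk => g2 n k (by omega)), Finset.smul_sum]
    apply Finset.sum_congr rfl
    intro p _
    rw [smul_smul]; ring_nf
  have e2 : br C m b (br C l a c) = ∑ p ∈ R, ∑ n ∈ R,
      (l ^ p * ((p.factorial : ℂ))⁻¹ * (m ^ n * ((n.factorial : ℂ))⁻¹)) • C.prd n b (C.prd p a c) := by
    rw [br_eq C l a c (2 * N) (fun n hn => h3 n (by omega)), map_sum]
    apply Finset.sum_congr rfl
    intro n _
    rw [map_smul, br_eq C m b _ (2 * N) (fun k hk => g3 n k (by omega)), Finset.smul_sum]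
    apply Finset.sum_congr rfl
    intro p _
    rw [smul_smul]
  let w : ℂ → ℕ → ℂ := fun z n => z ^ n * ((n.factorial : ℂ))⁻¹
  let h : ℕ → ℕ → ℕ → L := fun j p n => (w l j * w l p * w m n) • C.prd (p + n) (C.prd j a b) c
  have hz : ∀ j p n, N ≤ j ∨ N ≤ p + n → h j p n = 0 := by
    intro j p n hh
    simp only [h]; rw [g1 j (p + n) hh, smul_zero]
  have e3 : br C (l + m) (br C l a b) c = ∑ j ∈ R, ∑ p ∈ R, ∑ n ∈ R, h j p n := by
    rw [br_eq C l a b (2 * N) (fun n hn => h1 n (by omega)), map_sum, LinearMap.sum_apply]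
    apply Finset.sum_congr rfl
    intro j _
    rw [map_smul, LinearMap.smul_apply, br_eq C _ _ c (2 * N) (fun k hk => g1 j k (by omega)), Finset.smul_sum,
      ← sum_anti (2 * N) (fun p n => h j p n) (fun p n hpn => hz j p n (by omega))]
    apply Finset.sum_congr rfl
    intro k _
    rw [smul_smul, add_pow, Finset.sum_mul, Finset.mul_sum, Finset.sum_smul]
    apply Finset.sum_congr rfl
    intro p hp
    have hp' : p ≤ k := by simp at hp; omega
    simp only [h]
    rw [show p + (k - p) = k by omega]
    congr 1
    simp only [w]
    rw [Nat.cast_choose ℂ hp']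
    have hk : (k.factorial : ℂ) ≠ 0 := by exact_mod_cast k.factorial_ne_zero
    field_simp
  have e4 : (∑ p ∈ R, ∑ n ∈ R,
      (w l p * w m n) • (C.prd p a (C.prd n b c) - C.prd n b (C.prd p a c)))
      = ∑ j ∈ R, ∑ p ∈ R, ∑ n ∈ R, h j p n := by
    have : (∑ j ∈ R, ∑ p ∈ R, ∑ n ∈ R, h j p n) = ∑ n ∈ R, ∑ j ∈ R, ∑ p ∈ R, h j p n := by
      symm
      rw [Finset.sum_comm]
      apply Finset.sum_congr rfl
      intro j _
      rw [Finset.sum_comm]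
    rw [this, Finset.sum_comm]
    apply Finset.sum_congr rfl
    intro n _
    rw [← sum_anti (2 * N) (fun j p => h j p n) (fun j p hjp => hz j p n (by omega))]
    apply Finset.sum_congr rfl
    intro p _
    rw [C.jacobi, Finset.smul_sum]
    apply Finset.sum_congr rfl
    intro j hj
    have hj' : j ≤ p := by simp at hj; omega
    simp only [h]
    rw [show p - j + n = p + n - j by omega, smul_smul]
    congr 1
    simp only [w]
    rw [Nat.cast_choose ℂ hj']
    have hk : (p.factorial : ℂ) ≠ 0 := by exact_mod_cast p.factorial_ne_zero
    have : l ^ p = l ^ j * l ^ (p - j) := by rw [← pow_add]; congr 1; omega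
    rw [this]
    field_simp
  rw [e3, ← e4, e1, e2, ← Finset.sum_add_distrib]
  apply Finset.sum_congr rfl
  intro p _
  rw [← Finset.sum_add_distrib]
  apply Finset.sum_congr rfl
  intro n _
  simp only [w]
  rw [smul_sub]
  abel

/-- skew-symmetry for elements whose products are multiples of `t` -/
theorem br_skew (C : LieConformalAlgebra L) (l : ℂ) (a b t : L) (p : ℂ[X][X])
    (hp : ∀ n, C.prd n b a = (n.factorial : ℂ) • aeval C.D (p.coeff n) t) :
    br C l a b = - aeval C.D (p.eval (- X - Polynomial.C l)) t := by
  have hb : ∀ n, p.natDegree + 1 ≤ n → C.prd n b a = 0 := by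
    intro n hn
    rw [hp, coeff_eq_zero_of_natDegree_lt (by omega)]; simp
  set N := p.natDegree + 1 with hN
  have hab : ∀ n, C.prd n a b = - ∑ j ∈ Finset.range N,
      ((-1 : ℂ) ^ (n + j) * ((Nat.factorial j : ℂ))⁻¹) • (C.D ^ j) (C.prd (n + j) b a) := by
    intro n
    rw [C.skew]
    congr 1
    simp only [Module.End.pow_apply]
    apply finsum_eq_sum_of_support_subset
    intro j hj
    by_contra hc
    simp at hc
    apply hj
    simp only
    rw [hb _ (by omega), ← Module.End.pow_apply, map_zero, smul_zero]
  have hz : ∀ n, N ≤ n → C.prd n a b = 0 := by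
    intro n hn
    rw [hab, neg_eq_zero]
    apply Finset.sum_eq_zero
    intro j _
    rw [hb _ (by omega), map_zero, smul_zero]
  rw [br_eq C l a b N hz]
  simp only [hab, smul_neg, Finset.sum_neg_distrib]
  congr 1
  let φ : ℕ → ℕ → L := fun n j => (l ^ n * ((n.factorial : ℂ))⁻¹ * ((-1 : ℂ) ^ (n + j) * ((Nat.factorial j : ℂ))⁻¹)) • (C.D ^ j) (C.prd (n + j) b a)
  have h1 : (∑ n ∈ Finset.range N, (l ^ n * ((n.factorial : ℂ))⁻¹) • ∑ j ∈ Finset.range N,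
      ((-1 : ℂ) ^ (n + j) * ((Nat.factorial j : ℂ))⁻¹) • (C.D ^ j) (C.prd (n + j) b a))
      = ∑ n ∈ Finset.range N, ∑ j ∈ Finset.range N, φ n j := by
    apply Finset.sum_congr rfl; intro n _
    rw [Finset.smul_sum]
    apply Finset.sum_congr rfl; intro j _
    rw [smul_smul]
  rw [h1, ← sum_anti N φ (fun i j hij => by simp only [φ]; rw [hb _ hij, map_zero, smul_zero])]
  rw [Polynomial.eval_eq_sum_range, map_sum, LinearMap.sum_apply]
  apply Finset.sum_congr rfl
  intro m _
  have : (-X - Polynomial.C l : ℂ[X]) = Polynomial.C (-1) * (Polynomial.C l + X) := by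
    simp; ring
  rw [this, mul_pow, add_pow, Finset.mul_sum, Finset.mul_sum, map_sum, LinearMap.sum_apply]
  apply Finset.sum_congr rfl
  intro k hk
  have hk' : k ≤ m := by simp at hk; omega
  simp only [φ]
  rw [show k + (m - k) = m by omega, hp m]
  have hm : (m.factorial : ℂ) ≠ 0 := by exact_mod_cast m.factorial_ne_zero
  have : p.coeff m * (Polynomial.C (-1) ^ m * (Polynomial.C l ^ k * X ^ (m - k) * ((m.choose k : ℕ) : ℂ[X])))
     = Polynomial.C ((-1)^m * l ^ k * (m.choose k : ℂ)) * (X ^ (m - k) * p.coeff m) := by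
    simp only [map_mul, map_pow, map_natCast]; ring
  have key : ∀ z : ℂ, ∀ r q : ℂ[X], aeval C.D (Polynomial.C z * (r * q)) t = z • (aeval C.D r) (aeval C.D q t) := by
    intro z r q
    rw [map_mul, map_mul, aeval_C, Module.End.mul_apply, Module.End.mul_apply, Module.algebraMap_end_apply]
  rw [this, key, map_pow, aeval_X, map_smul, smul_smul]
  congr 1
  rw [Nat.cast_choose ℂ hk']
  field_simp

theorem br_of (C : LieConformalAlgebra L) (l : ℂ) (a b t : L) (p : ℂ[X][X])
    (hp : ∀ n, C.prd n a b = (n.factorial : ℂ) • aeval C.D (p.coeff n) t) :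
    br C l a b = aeval C.D (p.eval (Polynomial.C l)) t := by
  rw [br_eq C l a b (p.natDegree + 1), Polynomial.eval_eq_sum_range, map_sum, LinearMap.sum_apply]
  · apply Finset.sum_congr rfl
    intro n _
    have hm : (n.factorial : ℂ) ≠ 0 := by exact_mod_cast n.factorial_ne_zero
    rw [hp, smul_smul, mul_comm (p.coeff n), map_mul, ← map_pow, aeval_C, Module.End.mul_apply, Module.algebraMap_end_apply]
    congr 1
    field_simp
  · intro n hn
    rw [hp, coeff_eq_zero_of_natDegree_lt (by omega)]; simp

end CV

namespace CV

theorem evalEval_ext {p q : ℂ[X][X]} (h : ∀ x y, evalEval x y p = evalEval x y q) : p = q := by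
  apply Polynomial.eq_of_infinite_eval_eq
  apply Set.Infinite.mono (s := Set.range (fun y : ℂ => Polynomial.C y))
  · rintro _ ⟨y, rfl⟩
    apply Polynomial.funext
    intro x
    exact h x y
  · exact Set.infinite_range_of_injective Polynomial.C_injective

theorem eval_eval_poly (p : ℂ[X][X]) (r : ℂ[X]) (x : ℂ) :
    (p.eval r).eval x = evalEval x (r.eval x) p := by
  unfold evalEval
  rw [Polynomial.eval_eq_sum_range (p := p), Polynomial.eval_eq_sum_range (p := p), eval_finsetSum, eval_finsetSum]
  simp

variable {L : Type} [AddCommGroup L] [Module ℂ L]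

theorem sum_eq_aeval (D : L →ₗ[ℂ] L) (q : ℂ[X]) (x : L) :
    (q.sum fun k c => c • (⇑D)^[k] x) = aeval D q x := by
  rw [aeval_eq_sum_range, Polynomial.sum_over_range _ (by simp), LinearMap.sum_apply]
  simp [Module.End.pow_apply]

theorem applyP_eq (C : LieConformalAlgebra L) (q : ℂ[X]) (x : L) : C.applyP q x = aeval C.D q x :=
  sum_eq_aeval C.D q x

theorem sp_eq (R : RankOneContext L) (i j : ℤ) (n : ℕ) :
    R.prd n (R.bas i) (R.bas j) = (n.factorial : ℂ) • aeval R.D ((R.sp i j).coeff n) (R.bas (i + j)) := by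
  rw [R.sp_brkt, sum_eq_aeval]

theorem indep (R : RankOneContext L) (i : ℤ) (hi : R.G i ≠ ⊥) (q : ℂ[X])
    (h : aeval R.D q (R.bas i) = 0) : q = 0 := by
  have h1 := linearIndependent_iff'.1 (R.bas_indep i hi) q.support q.coeff (by
    rw [← sum_eq_aeval] at h
    exact h)
  ext k
  by_cases hk : k ∈ q.support
  · simpa using h1 k hk
  · simpa using hk

theorem zero_of_bot (R : RankOneContext L) {i j : ℤ} (h : R.G i = ⊥ ∨ R.G j = ⊥ ∨ R.G (i + j) = ⊥) (x y : ℂ) :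
    evalEval x y (R.sp i j) = 0 := by
  rw [R.sp_zero i j h]; simp

theorem E_skew (R : RankOneContext L) (i j : ℤ) (x l : ℂ) :
    evalEval x l (R.sp i j) = - evalEval x (-l - x) (R.sp j i) := by
  by_cases hb : R.G (i + j) = ⊥
  · rw [zero_of_bot R (Or.inr (Or.inr hb)), zero_of_bot R (Or.inr (Or.inr (by rwa [add_comm])))]; simp
  have h1 := br_of R.toLieConformalAlgebra l _ _ _ _ (sp_eq R i j)
  have h2 := br_skew R.toLieConformalAlgebra l (R.bas i) (R.bas j) _ _ (sp_eq R j i)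
  rw [add_comm j i, h1, ← sub_eq_zero, sub_neg_eq_add, ← LinearMap.add_apply, ← map_add] at h2
  have h3 := indep R _ hb _ h2
  have h4 := congrArg (Polynomial.eval x) h3
  rw [eval_add, eval_eval_poly, eval_eval_poly] at h4
  simp at h4
  rw [← sub_eq_zero, sub_neg_eq_add, ← h4]
  congr 2
  ring

theorem E_jac (R : RankOneContext L) (i j k : ℤ) (x l m : ℂ) :
    evalEval (x + l) m (R.sp j k) * evalEval x l (R.sp i (j + k)) =
    evalEval (-l - m) l (R.sp i j) * evalEval x (l + m) (R.sp (i + j) k)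
    + evalEval (x + m) l (R.sp i k) * evalEval x m (R.sp j (i + k)) := by
  by_cases hb : R.G (i + j + k) = ⊥
  · rw [zero_of_bot R (i := i) (j := j + k) (Or.inr (Or.inr (by rwa [← add_assoc]))),
      zero_of_bot R (i := i + j) (j := k) (Or.inr (Or.inr hb)),
      zero_of_bot R (i := j) (j := i + k) (Or.inr (Or.inr (by rwa [add_left_comm, ← add_assoc])))]
    simp
  have hj := br_jacobi R.toLieConformalAlgebra l m (R.bas i) (R.bas j) (R.bas k)
  have B := fun (l : ℂ) (i j : ℤ) => br_of R.toLieConformalAlgebra l _ _ _ _ (sp_eq R i j)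
  rw [B m j k, B l i j, B l i k, br_poly_right, br_poly_right, br_poly_left, B, B, B,
    show i + (j + k) = i + j + k by ring, show j + (i + k) = i + j + k by ring,
    ← Module.End.mul_apply, ← Module.End.mul_apply, ← map_mul, ← map_mul, ← LinearMap.smul_apply,
    ← map_smul, ← LinearMap.add_apply, ← map_add, ← sub_eq_zero, ← LinearMap.sub_apply, ← map_sub] at hj
  have h3 := indep R _ hb _ hj
  have h4 := congrArg (Polynomial.eval x) h3
  simp only [eval_sub, eval_add, eval_mul, eval_comp, eval_eval_poly, eval_smul, eval_X, eval_C, eval_zero, smul_eq_mul] at h4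
  rw [neg_add'] at h4
  simp only [eval_C] at h4
  exact sub_eq_zero.1 h4

theorem cancel {p q : ℂ[X][X]} (h : ∀ x k l, evalEval (-k) l p * evalEval x k q = 0) : p = 0 ∨ q = 0 := by
  by_contra hc
  push Not at hc
  obtain ⟨hp, hq⟩ := hc
  have : ∃ a b, evalEval a b p ≠ 0 := by
    by_contra hn
    push Not at hn
    exact hp (evalEval_ext (by intro x y; rw [hn]; simp))
  obtain ⟨a, b, hab⟩ := this
  apply hq
  apply evalEval_ext
  intro x y
  -- polynomials in k
  have e1 : (p.eval (Polynomial.C b)).comp (-X) * (q.map (evalRingHom x)) = 0 := by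
    apply Polynomial.funext
    intro k
    have := h x k b
    rw [eval_mul, eval_comp, eval_zero, ← this]
    simp [evalEval, Polynomial.map_evalRingHom_eval]
  rcases mul_eq_zero.1 e1 with h1 | h1
  · exfalso
    apply hab
    have := congrArg (Polynomial.eval (-a)) h1
    simpa [evalEval, eval_comp] using this
  · have := congrArg (Polynomial.eval y) h1
    simpa [Polynomial.map_evalRingHom_eval] using this

def flip (R : RankOneContext L) : RankOneContext L where
  toLieConformalAlgebra := R.toLieConformalAlgebra
  G i := R.G (-i)
  internal := by
    have h := (DirectSum.isInternal_submodule_iff_iSupIndep_and_iSup_eq_top _).1 R.internal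
    rw [DirectSum.isInternal_submodule_iff_iSupIndep_and_iSup_eq_top]
    refine ⟨h.1.comp (f := fun i : ℤ => -i) neg_injective, ?_⟩
    rw [← h.2]
    exact (Equiv.neg ℤ).iSup_comp (g := R.G)
  dGrade i := R.dGrade (-i)
  prdGrade i j n a ha b hb := by
    have := R.prdGrade (-i) (-j) n a ha b hb
    rwa [← neg_add] at this
  bas i := R.bas (-i)
  sp i j := R.sp (-i) (-j)
  bas_mem i := R.bas_mem (-i)
  bas_zero i := R.bas_zero (-i)
  bas_indep i := R.bas_indep (-i)
  bas_span i := R.bas_span (-i)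
  sp_brkt i j n := by
    have := R.sp_brkt (-i) (-j) n
    rwa [← neg_add] at this
  sp_zero i j := by
    have := R.sp_zero (-i) (-j)
    rwa [← neg_add] at this
  supp_zero := by simpa using R.supp_zero
  abelian0 n x hx y hy := R.abelian0 n x (by simpa using hx) y (by simpa using hy)

def GenP (R : RankOneContext L) : Prop :=
  ∀ N : Submodule ℂ L, (∀ x ∈ N, R.D x ∈ N) →
    (∀ n : ℕ, ∀ a ∈ N, ∀ b ∈ N, R.prd n a b ∈ N) →
    R.G 1 ≤ N → R.G 0 ≤ N → R.G (-1) ≤ N → N = ⊤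

theorem GenP_flip (R : RankOneContext L) (h : GenP R) : GenP (flip R) := by
  intro N h1 h2 h3 h4 h5
  exact h N h1 h2 (by simpa [flip] using h5) (by simpa [flip] using h4) (by simpa [flip] using h3)

theorem prd_zero_left (C : LieConformalAlgebra L) (a b : L) (h : ∀ n, C.prd n a b = 0) (k : ℕ) :
    ∀ n, C.prd n ((C.D ^ k) a) b = 0 := by
  induction k with
  | zero => simpa using h
  | succ k ih =>
    intro n
    rw [pow_succ', Module.End.mul_apply, C.sesq, ih, smul_zero]

theorem prd_zero_right (C : LieConformalAlgebra L) (a b : L) (h : ∀ n, C.prd n a b = 0) (k : ℕ) :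
    ∀ n, C.prd n a ((C.D ^ k) b) = 0 := by
  induction k with
  | zero => simpa using h
  | succ k ih =>
    intro n
    rw [pow_succ', Module.End.mul_apply, C.sesq', ih, ih, smul_zero, map_zero, add_zero]

theorem span' (R : RankOneContext L) (i : ℤ) :
    R.G i ≤ Submodule.span ℂ (Set.range fun k : ℕ => (R.D ^ k) (R.bas i)) := by
  by_cases h : R.G i = ⊥
  · rw [h]; exact bot_le
  · conv_lhs => rw [R.bas_span i h]
    simp [Module.End.pow_apply]

theorem prd_zero_of_sp (R : RankOneContext L) (i j : ℤ) (h : R.sp i j = 0) (n : ℕ) (a b : L)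
    (ha : a ∈ R.G i) (hb : b ∈ R.G j) : R.prd n a b = 0 := by
  have h0 : ∀ n, R.prd n (R.bas i) (R.bas j) = 0 := by
    intro n; rw [sp_eq, h]; simp
  have ha' := span' R i ha
  have hb' := span' R j hb
  clear ha hb
  induction ha' using Submodule.span_induction with
  | zero => simp
  | add x y _ _ hx hy => simp [hx, hy]
  | smul c x _ hx => simp [hx]
  | mem x hx =>
    obtain ⟨k, rfl⟩ := hx
    induction hb' using Submodule.span_induction with
    | zero => simp
    | add x y _ _ hx hy => simp [hx, hy]
    | smul c x _ hx => simp [hx]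
    | mem x hx =>
      obtain ⟨k', rfl⟩ := hx
      exact prd_zero_left R.toLieConformalAlgebra _ _ (fun n => prd_zero_right _ _ _ h0 k' n) k n

theorem sp_gen (R : RankOneContext L) (hg : GenP R) (n : ℕ) (hn : 1 ≤ n) :
    R.G (n + 1) ≠ ⊥ → R.sp 1 n ≠ 0 := by
  induction n using Nat.strong_induction_on with
  | _ n ih =>
  intro hb h0
  have key : ∀ i : ℕ, 1 ≤ i → i ≤ n → ∀ j : ℕ, 1 ≤ j → j ≤ n → n + 1 ≤ i + j → R.sp i j = 0 := by
    intro i hi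
    induction i, hi using Nat.le_induction with
    | base =>
      intro _ j hj hj' hij
      have : j = n := by omega
      subst this; simpa using h0
    | succ i hi IH =>
      intro hin j hj hj' hij
      by_cases hS : R.G (i + 1) = ⊥
      · exact R.sp_zero _ _ (Or.inl (by push_cast; exact hS))
      have hne := ih i (by omega) hi hS
      have hc := cancel (p := R.sp 1 i) (q := R.sp (i + 1 : ℕ) j) (by
        intro x k l
        have hJ := E_jac R 1 i j x l (k - l)
        have z1 : evalEval (x + l) (k - l) (R.sp i j) * evalEval x l (R.sp 1 (i + j)) = 0 := by
          by_cases hh : i + j = n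
          · have : (R.sp 1 ((i : ℤ) + j)) = 0 := by rw [← h0, ← hh]; push_cast; rfl
            rw [this]; simp
          · rw [IH (by omega) j hj hj' (by omega)]; simp
        have z2 : evalEval (x + (k - l)) l (R.sp 1 j) * evalEval x (k - l) (R.sp i (1 + j)) = 0 := by
          by_cases hh : j = n
          · rw [hh, h0]; simp
          · have := IH (by omega) (1 + j) (by omega) (by omega) (by omega)
            push_cast at this
            rw [this]; simp
        rw [z1, z2, add_zero] at hJ
        rw [← hJ.symm]
        push_cast
        rw [add_comm (1 : ℤ) i]
        congr 2 <;> ring)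
      exact hc.resolve_left hne
  -- the subalgebra
  set N : Submodule ℂ L := ⨆ i : ℤ, ⨆ _ : i ≤ n, R.G i with hN
  have hle : ∀ i : ℤ, i ≤ n → R.G i ≤ N := fun i hi => le_iSup₂_of_le i hi le_rfl
  have hind : ∀ (motive : L → Prop) (x : L), x ∈ N → (∀ i : ℤ, i ≤ n → ∀ x ∈ R.G i, motive x) → motive 0 →
      (∀ x y, motive x → motive y → motive (x + y)) → motive x := by
    intro motive x hx h1 h2 h3
    rw [hN] at hx
    refine Submodule.iSup_induction _ (motive := motive) hx ?_ h2 h3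
    intro i y hy
    by_cases hi : i ≤ n
    · simp only [hi, iSup_pos] at hy; exact h1 i hi y hy
    · simp only [hi, iSup_false, Submodule.mem_bot, not_false_eq_true, iSup_neg] at hy
      rw [hy]; exact h2
  have hT : N = ⊤ := by
    apply hg N
    · intro x hx
      refine hind (fun x => R.D x ∈ N) x hx ?_ (by simp) ?_
      · intro i hi y hy; exact hle i hi (R.dGrade i y hy)
      · intro a b ha hb; rw [map_add]; exact N.add_mem ha hb
    · intro m a ha b hb
      refine hind (fun x => R.prd m x b ∈ N) a ha ?_ (by simp) ?_
      · intro i hi y hy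
        refine hind (fun x => R.prd m y x ∈ N) b hb ?_ (by simp) ?_
        · intro j hj z hz
          by_cases hij : i + j ≤ n
          · exact hle _ hij (R.prdGrade i j m y hy z hz)
          · have := key i.toNat (by omega) (by omega) j.toNat (by omega) (by omega) (by omega)
            rw [Int.toNat_of_nonneg (by omega), Int.toNat_of_nonneg (by omega)] at this
            rw [prd_zero_of_sp R i j this m y z hy hz]
            exact N.zero_mem
        · intro a b ha hb; rw [map_add]; exact N.add_mem ha hb
      · intro a b ha hb; rw [map_add, LinearMap.add_apply]; exact N.add_mem ha hb
    · exact hle 1 (by omega)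
    · exact hle 0 (by omega)
    · exact hle (-1) (by omega)
  have hI := ((DirectSum.isInternal_submodule_iff_iSupIndep_and_iSup_eq_top _).1 R.internal).1 (n + 1)
  have : N ≤ ⨆ j : ℤ, ⨆ _ : j ≠ n + 1, R.G j := by
    apply iSup₂_le
    intro i hi
    exact le_iSup₂_of_le i (by omega) le_rfl
  rw [hT, top_le_iff] at this
  rw [this] at hI
  exact hb (disjoint_top.1 hI)

end CV

namespace CV

/-- evaluated structure polynomial -/
def E (P : ℤ → ℤ → ℂ[X][X]) (i j : ℤ) (x y : ℂ) : ℂ := evalEval x y (P i j)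

structure Sys (S : ℤ → Prop) (P : ℤ → ℤ → ℂ[X][X]) : Prop where
  jac : ∀ i j k ij jk ik : ℤ, i + j = ij → j + k = jk → i + k = ik → ∀ x l m : ℂ,
    E P j k (x + l) m * E P i jk x l = E P i j (-l - m) l * E P ij k x (l + m)
      + E P i k (x + m) l * E P j ik x m
  skew : ∀ i j : ℤ, ∀ x l : ℂ, E P i j x l = - E P j i x (-l - x)
  zero : ∀ i j : ℤ, (¬ S i ∨ ¬ S j ∨ ¬ S (i + j)) → P i j = 0
  gen : ∀ n : ℕ, 1 ≤ n → S (n + 1) → P 1 n ≠ 0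
  gen' : ∀ n : ℕ, 1 ≤ n → S (-(n + 1)) → P (-1) (-n) ≠ 0
  z00 : P 0 0 = 0
  s0 : S 0
  s1 : S 1
  s1' : S (-1)

def fl (P : ℤ → ℤ → ℂ[X][X]) (i j : ℤ) : ℂ[X][X] := - P (-i) (-j)

theorem E_fl (P : ℤ → ℤ → ℂ[X][X]) (i j : ℤ) (x y : ℂ) : E (fl P) i j x y = - E P (-i) (-j) x y := by
  simp [E, fl]

theorem Sys.flip {S : ℤ → Prop} {P : ℤ → ℤ → ℂ[X][X]} (h : Sys S P) : Sys (fun i => S (-i)) (fl P) where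
  jac i j k ij jk ik h1 h2 h3 x l m := by
    have := h.jac (-i) (-j) (-k) (-ij) (-jk) (-ik) (by omega) (by omega) (by omega) x l m
    simp only [E_fl]
    linear_combination this
  skew i j x l := by simp only [E_fl]; rw [h.skew]
  zero i j hh := by
    simp only [fl, neg_eq_zero]
    apply h.zero
    rwa [← neg_add]
  gen n hn hs := by
    simp only [fl, ne_eq, neg_eq_zero]
    exact h.gen' n hn hs
  gen' n hn hs := by
    simp only [fl, ne_eq, neg_eq_zero, neg_neg] at *
    exact h.gen n hn hs
  z00 := by simp [fl, h.z00]
  s0 := by simpa using h.s0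
  s1 := h.s1'
  s1' := by simpa using h.s1

def sc (c : ℤ → ℂ) (P : ℤ → ℤ → ℂ[X][X]) (i j : ℤ) : ℂ[X][X] :=
  Polynomial.C (Polynomial.C (c i * c j / c (i + j))) * P i j

theorem E_sc (c : ℤ → ℂ) (P : ℤ → ℤ → ℂ[X][X]) (i j : ℤ) (x y : ℂ) :
    E (sc c P) i j x y = c i * c j / c (i + j) * E P i j x y := by
  simp [E, sc]

theorem Sys.scale {S : ℤ → Prop} {P : ℤ → ℤ → ℂ[X][X]} (h : Sys S P) (c : ℤ → ℂ) (hc : ∀ i, c i ≠ 0) :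
    Sys S (sc c P) where
  jac i j k ij jk ik h1 h2 h3 x l m := by
    have := h.jac i j k ij jk ik h1 h2 h3 x l m
    simp only [E_sc]
    subst h1 h2 h3
    have a1 := hc (i + j)
    have a2 := hc (j + k)
    have a3 := hc (i + k)
    have a4 := hc (i + j + k)
    rw [show i + (j + k) = i + j + k by ring, show j + (i + k) = i + j + k by ring]
    field_simp
    linear_combination (c i * c j * c k) * this
  skew i j x l := by
    simp only [E_sc]; rw [h.skew, add_comm j i]; ring
  zero i j hh := by
    simp only [sc]; rw [h.zero i j hh, mul_zero]
  gen n hn hs := by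
    simp only [sc]
    refine mul_ne_zero ?_ (h.gen n hn hs)
    simp [hc]
  gen' n hn hs := by
    simp only [sc]
    refine mul_ne_zero ?_ (h.gen' n hn hs)
    simp [hc]
  z00 := by simp [sc, h.z00]
  s0 := h.s0
  s1 := h.s1
  s1' := h.s1'

theorem polyLine (p : ℂ[X][X]) (u w : ℂ[X]) : ∃ r : ℂ[X], ∀ x, r.eval x = evalEval (u.eval x) (w.eval x) p := by
  refine ⟨(p.map (compRingHom u)).eval w, fun x => ?_⟩
  rw [Polynomial.eval_map, evalEval, Polynomial.eval₂_eq_sum_range, Polynomial.eval_eq_sum_range (p := p), eval_finsetSum, eval_finsetSum]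
  simp

theorem factor (p q : ℂ[X][X]) (φ ψ : ℂ → ℂ → ℂ) (u w : ℂ[X]) (δ : ℂ) (hδ : δ ≠ 0)
    (h : ∀ x m l, evalEval x m p * evalEval (x - l) l q = φ x m * ψ x l)
    (hu : ∀ x, φ x (u.eval x) = 1) (hw : ∀ x, ψ x (w.eval x) = δ) :
    ∃ k : ℂ, k ≠ 0 ∧ (∀ x m, evalEval x m p = k * φ x m) ∧
      (∀ x l, evalEval x l q = k⁻¹ * ψ (x + l) l) := by
  obtain ⟨U, hU⟩ := polyLine p X u
  obtain ⟨W, hW⟩ := polyLine q (X - w) w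
  have hUW : U * W = Polynomial.C δ := by
    apply Polynomial.funext
    intro x
    rw [eval_mul, hU, hW, eval_X, eval_sub, eval_X, h, hu, hw]; simp
  have hUu : IsUnit U := by
    apply IsUnit.of_mul_eq_one (W * Polynomial.C δ⁻¹)
    rw [← mul_assoc, hUW, ← map_mul, mul_inv_cancel₀ hδ, map_one]
  obtain ⟨k, hk, hkU⟩ := Polynomial.isUnit_iff.1 hUu
  have hk0 : k ≠ 0 := hk.ne_zero
  have hUk : ∀ x, evalEval x (u.eval x) p = k := by
    intro x; have := hU x; rw [← hkU] at this; simpa using this.symm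
  have hq : ∀ x l, k * evalEval (x - l) l q = ψ x l := by
    intro x l
    rw [← hUk x, h, hu, one_mul]
  refine ⟨k, hk0, ?_, ?_⟩
  · intro x m
    have h1 := h x m (w.eval x)
    have h2 := hq x (w.eval x)
    rw [hw] at h1 h2
    have : evalEval x m p * δ = k * φ x m * δ := by
      rw [← h2]; rw [← h2] at h1; linear_combination k * h1
    exact mul_right_cancel₀ hδ this
  · intro x l
    rw [← hq (x + l) l, add_sub_cancel_right, inv_mul_cancel_left₀ hk0]

structure FG (P : ℤ → ℤ → ℂ[X][X]) (f g : ℂ → ℂ) : Prop where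
  hf : ∀ x y, E P 0 1 x y = f y
  hg : ∀ x y, E P (-1) 1 x y = g x
  hn : ∃ x, g x ≠ 0

variable {S : ℤ → Prop} {P : ℤ → ℤ → ℂ[X][X]} {f g : ℂ → ℂ}

theorem Sys.e00 (h : Sys S P) (x y : ℂ) : E P 0 0 x y = 0 := by simp [E, h.z00]

theorem FG.f' (hh : FG P f g) (h : Sys S P) (x y : ℂ) : E P 0 (-1) x y = - f y := by
  obtain ⟨z, hz⟩ := hh.hn
  have := h.jac 0 (-1) 1 (-1) 0 1 (by norm_num) (by norm_num) (by norm_num) z y (-y - x)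
  rw [h.e00, hh.hg, hh.hf, hh.hg, hh.hg] at this
  have e : -y - (-y - x) = x := by ring
  rw [e] at this
  apply mul_right_cancel₀ hz
  linear_combination -this

theorem FG.g' (hh : FG P f g) (h : Sys S P) (x y : ℂ) : E P 1 (-1) x y = - g x := by
  rw [h.skew, hh.hg]

theorem FG.f10 (hh : FG P f g) (h : Sys S P) (x y : ℂ) : E P 1 0 x y = - f (-y - x) := by
  rw [h.skew, hh.hf]

theorem FG.flip (hh : FG P f g) (h : Sys S P) : FG (fl P) f g where
  hf x y := by rw [E_fl]; have := hh.f' h x y; simp [this]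
  hg x y := by rw [E_fl]; have := hh.g' h x y; simp [this]
  hn := hh.hn

theorem FG.k11 (hh : FG P f g) (h : Sys S P) (x l m : ℂ) :
    E P 1 1 (x + l) m * E P (-1) 2 x l = g (-(l + m)) * f (l + m) - g (x + m) * f (-(x + m)) := by
  have := h.jac (-1) 1 1 0 2 0 (by norm_num) (by norm_num) (by norm_num) x l m
  rw [this, hh.hg, hh.hf, hh.hg, hh.f10 h]
  have e1 : -l - m = -(l + m) := by ring
  have e2 : -m - x = -(x + m) := by ring
  rw [e1, e2]; ring

theorem FG.shape (hh : FG P f g) (h : Sys S P) (α β γ : ℂ) (hF : ∀ x, g (-x) * f x = α * x ^ 2 + β * x + γ)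
    (hab : α ≠ 0 ∨ β ≠ 0) :
    ∃ k : ℂ, k ≠ 0 ∧ (∀ x m, E P 1 1 x m = k * (x + 2 * m)) ∧
      (∀ x l, E P (-1) 2 x l = k⁻¹ * (α * (l - x) + β)) := by
  have hw : ∃ w : ℂ[X], ∃ δ : ℂ, δ ≠ 0 ∧ ∀ x, α * (2 * w.eval x - x) + β = δ := by
    by_cases ha : α = 0
    · exact ⟨0, β, hab.resolve_left (by simpa using ha), by intro x; simp [ha]⟩
    · refine ⟨Polynomial.C (2 * α)⁻¹ * (Polynomial.C (1 - β) + Polynomial.C α * X), 1, one_ne_zero, ?_⟩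
      intro x
      simp only [eval_mul, eval_C, eval_add, eval_X]
      field_simp
      ring
  obtain ⟨w, δ, hδ, hw⟩ := hw
  obtain ⟨k, hk, h1, h2⟩ := factor (P 1 1) (P (-1) 2) (fun x m => x + 2 * m) (fun x l => α * (2 * l - x) + β)
    (Polynomial.C (1/2) * (1 - X)) w δ hδ (by
      intro x m l
      have := hh.k11 h (x - l) l m
      rw [sub_add_cancel, hF, show g (x - l + m) = g (-(-(x - l + m))) by rw [neg_neg], hF] at this
      simp only [E] at this
      rw [this]; ring) (by intro x; simp) hw
  refine ⟨k, hk, h1, ?_⟩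
  intro x l
  have := h2 x l
  simp only [E]; rw [this]; ring

/-- `P_{0,j+1}` from `P_{1,j}` -/
theorem FG.step0 (hh : FG P f g) (h : Sys S P) (j : ℤ) (k M d : ℂ) (hk : k ≠ 0) (hM : M ≠ 0)
    (h1 : ∀ x y, E P 1 j x y = k * (x + M * y + d)) (h0 : ∀ x y, E P 0 j x y = j * f y)
    (hj : M = 1 + j) : ∀ x y, E P 0 (j + 1) x y = (j + 1 : ℤ) * f y := by
  intro x y
  have := h.jac 0 1 j 1 (j + 1) j (by ring) (by ring) (by ring) x y ((1 - d - x - y) / M)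
  rw [hh.hf, h1, h1, h1, h0] at this
  have e : x + y + M * ((1 - d - x - y) / M) + d = 1 := by field_simp; ring
  rw [e] at this
  apply mul_left_cancel₀ hk
  push_cast
  have e2 : M * ((1 - d - x - y) / M) = 1 - d - x - y := by field_simp
  rw [mul_add M, e2] at this
  rw [hj] at this
  linear_combination this

theorem FG.gamma (hh : FG P f g) (h : Sys S P) (α β γ : ℂ) (hF : ∀ x, g (-x) * f x = α * x ^ 2 + β * x + γ)
    (hab : α ≠ 0 ∨ β ≠ 0) : 9 * α * γ = 2 * β ^ 2 := by
  obtain ⟨k, hk, h1, h2⟩ := hh.shape h α β γ hF hab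
  have h02 := hh.step0 h 1 k 2 0 hk two_ne_zero (by intro x y; rw [h1]; ring) (by intro x y; rw [hh.hf]; simp) (by norm_num)
  have key : ∀ l m, E P 1 2 0 m * E P (-1) 3 (-l) l = 9 * α * l * m + β * (l + 4 * m) + 2 * γ := by
    intro l m
    have := h.jac (-1) 1 2 0 3 1 (by norm_num) (by norm_num) (by norm_num) (-l) l m
    rw [neg_add_cancel] at this
    rw [this, hh.hg, h2, h1]
    have h3 := h02 (-l) (l + m)
    norm_num at h3
    rw [h3]
    have := hF (l + m)
    rw [show -(l + m) = -l - m by ring] at this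
    have e : k⁻¹ * k = 1 := inv_mul_cancel₀ hk
    linear_combination 2 * this + (α * (l - (-l + m)) + β) * (-l + 2 * m) * e
  have a := key 0 0
  have b := key 1 1
  have c := key 0 1
  have d := key 1 0
  have : (E P 1 2 0 0 * E P (-1) 3 (-0) 0) * (E P 1 2 0 1 * E P (-1) 3 (-1) 1)
    = (E P 1 2 0 1 * E P (-1) 3 (-0) 0) * (E P 1 2 0 0 * E P (-1) 3 (-1) 1) := by ring
  rw [a, b, c, d] at this
  linear_combination this / 2

theorem FG.pos2 (hh : FG P f g) (h : Sys S P) (s : ℂ) (hF : ∀ x, g (-x) * f x = (x - s) * (x - 2 * s)) (j : ℕ) (hj : 1 ≤ j) :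
    (∀ x y, E P 0 j x y = j * f y) ∧
    ∃ k : ℂ, k ≠ 0 ∧ (∀ x y, E P 1 j x y = k * (x + (1 + j) * y + s * (1 - j))) ∧
      (∀ x y, E P (-1) (j + 1) x y = k⁻¹ * (-x + j * y - s * (j + 2))) := by
  induction j, hj using Nat.le_induction with
  | base =>
    obtain ⟨k, hk, h1, h2⟩ := hh.shape h 1 (-3 * s) (2 * s ^ 2) (by intro x; rw [hF]; ring) (by simp)
    refine ⟨by intro x y; simpa using hh.hf x y, k, hk, ?_, ?_⟩
    · intro x y; have := h1 x y; norm_num; rw [this]; try ring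
    · intro x y; norm_num; rw [h2]; ring
  | succ j hj ih =>
    obtain ⟨h0, k, hk, h1, h2⟩ := ih
    have hj1 : (1 + j : ℂ) ≠ 0 := by
      have : ((1 + j : ℕ) : ℂ) ≠ 0 := by rw [Nat.cast_ne_zero]; omega
      simpa using this
    have hj2 : (2 + j : ℂ) ≠ 0 := by
      have : ((2 + j : ℕ) : ℂ) ≠ 0 := by rw [Nat.cast_ne_zero]; omega
      simpa using this
    have h0' := hh.step0 h j k (1 + j) (s * (1 - j)) hk hj1 h1 (by simpa using h0) (by simp)
    refine ⟨by simpa using h0', ?_⟩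
    obtain ⟨k', hk', h1', h2'⟩ := factor (P 1 (j + 1)) (P (-1) (j + 2)) (fun x m => x + (2 + j) * m - s * j)
      (fun x l => (2 + j) * l - x - s * (j + 3)) (Polynomial.C (2 + j : ℂ)⁻¹ * (1 - X + Polynomial.C (s * j)))
      (Polynomial.C (2 + j : ℂ)⁻¹ * (1 + X + Polynomial.C (s * (j + 3)))) 1 one_ne_zero
      (by
        intro x m l
        have := h.jac (-1) 1 (j + 1) 0 (j + 2) j (by norm_num) (by ring) (by ring) (x - l) l m
        rw [sub_add_cancel, hh.hg, h2, h1, h0'] at this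
        simp only [E] at this
        rw [this]
        have := hF (l + m)
        rw [show -(l + m) = -l - m by ring] at this
        have e : k⁻¹ * k = 1 := inv_mul_cancel₀ hk
        push_cast
        linear_combination (j + 1) * this + (-(x - l + m) + j * l - s * (j + 2)) * (x - l + (1 + j) * m + s * (1 - j)) * e)
      (by intro x; simp; field_simp; ring) (by intro x; simp; field_simp; ring)
    refine ⟨k', hk', ?_, ?_⟩
    · intro x y
      have := h1' x y
      simp only [E]; push_cast; rw [this]; ring
    · intro x y
      have := h2' x y
      simp only [E]; push_cast; rw [show (j : ℤ) + 1 + 1 = j + 2 by ring, this]; ring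

end CV

namespace CV

theorem scl (k k' : ℕ → ℂ) (hk : ∀ n, k n ≠ 0) (hk' : ∀ n, k' n ≠ 0) :
    ∃ c : ℤ → ℂ, (∀ i, c i ≠ 0) ∧ c 0 = 1 ∧ c 1 = 1 ∧ c (-1) = 1 ∧
      (∀ j : ℕ, 1 ≤ j → c (j + 1) = c j * k j) ∧ (∀ j : ℕ, 1 ≤ j → c (-(j + 1)) = c (-j) * k' j) := by
  refine ⟨fun i => if 0 ≤ i then ∏ t ∈ Finset.range (i.toNat - 1), k (t + 1)
    else ∏ t ∈ Finset.range ((-i).toNat - 1), k' (t + 1), ?_, ?_, ?_, ?_, ?_, ?_⟩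
  · intro i
    dsimp only
    split_ifs
    · exact Finset.prod_ne_zero_iff.2 (fun _ _ => hk _)
    · exact Finset.prod_ne_zero_iff.2 (fun _ _ => hk' _)
  · simp
  · simp
  · simp
  · intro j hj
    obtain ⟨j, rfl⟩ := Nat.exists_eq_add_of_le' hj
    dsimp only
    rw [if_pos (by positivity), if_pos (by positivity)]
    have e1 : ((((j + 1 : ℕ) : ℤ) + 1).toNat - 1) = j + 1 := by omega
    have e2 : (((j + 1 : ℕ) : ℤ).toNat - 1) = j := by omega
    rw [e1, e2, Finset.prod_range_succ]
  · intro j hj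
    obtain ⟨j, rfl⟩ := Nat.exists_eq_add_of_le' hj
    dsimp only
    rw [if_neg (by omega), if_neg (by omega)]
    have e1 : ((-(-(((j + 1 : ℕ) : ℤ) + 1))).toNat - 1) = j + 1 := by omega
    have e2 : ((-(-((j + 1 : ℕ) : ℤ))).toNat - 1) = j := by omega
    rw [e1, e2, Finset.prod_range_succ]

/-- target of type II -/
def T (f g : ℂ → ℂ) (s : ℂ) (i j : ℤ) (x y : ℂ) : ℂ :=
  if i + j = 0 then -i * g x else if i = 0 then j * f y else if j = 0 then -i * f (-y - x)
  else i * x + (i + j) * y + s * (i - j)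

theorem T_gen {f g : ℂ → ℂ} {s : ℂ} {i j : ℤ} (h1 : i + j ≠ 0) (h2 : i ≠ 0) (h3 : j ≠ 0) (x y : ℂ) :
    T f g s i j x y = i * x + (i + j) * y + s * (i - j) := by
  simp [T, h1, h2, h3]
theorem T_sum {f g : ℂ → ℂ} {s : ℂ} {i j : ℤ} (h1 : i + j = 0) (x y : ℂ) :
    T f g s i j x y = -i * g x := by
  simp [T, h1]
theorem T_right {f g : ℂ → ℂ} {s : ℂ} {i j : ℤ} (h1 : i ≠ 0) (h : j = 0) (x y : ℂ) :
    T f g s i j x y = -i * f (-y - x) := by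
  subst h
  simp [T, h1]

theorem T_fl (f g : ℂ → ℂ) (s : ℂ) (i j : ℤ) (x y : ℂ) : - T f g s (-i) (-j) x y = T f g s i j x y := by
  unfold T
  have : -i + -j = 0 ↔ i + j = 0 := by omega
  simp only [this, neg_eq_zero]
  split_ifs <;> push_cast <;> ring

theorem T_jac (f g : ℂ → ℂ) (s : ℂ) (hF : ∀ u v, u + v = 0 → g u * f v = (v - s) * (v - 2 * s))
    (i j : ℤ) (hi : 1 ≤ i) (x l m : ℂ) :
    T f g s i j (x + l) m * T f g s 1 (i + j) x l = T f g s 1 i (-l - m) l * T f g s (i + 1) j x (l + m)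
      + T f g s 1 j (x + m) l * T f g s i (j + 1) x m := by
  rw [T_gen (i := 1) (j := i) (by omega) (by omega) (by omega)]
  by_cases c1 : i + j + 1 = 0
  · rw [T_gen (i := i) (j := j) (by omega) (by omega) (by omega), T_sum (i := 1) (by omega),
      T_sum (i := i + 1) (by omega), T_gen (i := 1) (j := j) (by omega) (by omega) (by omega),
      T_sum (i := i) (by omega)]
    obtain rfl : j = -1 - i := by omega
    push_cast; ring
  by_cases c2 : j = 0
  · subst c2
    rw [T_right (i := i) (by omega) rfl, T_gen (i := 1) (by omega) (by omega) (by omega),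
      T_right (i := i + 1) (by omega) rfl, T_right (i := 1) (by omega) rfl, T_gen (i := i) (by omega) (by omega) (by omega)]
    rw [show -m - (x + l) = -(l + m) - x by ring, show -l - (x + m) = -(l + m) - x by ring]
    push_cast; ring
  by_cases c3 : j = -1
  · subst c3
    rw [T_gen (i := i + 1) (j := -1) (by omega) (by omega) (by omega), T_sum (i := 1) (j := -1) (by omega),
      T_right (i := i) (j := -1 + 1) (by omega) (by omega)]
    have h1 := hF (x + m) (-m - x) (by ring)
    by_cases c4 : i = 1
    · subst c4
      rw [T_sum (i := 1) (j := -1) (by omega), T_right (i := 1) (j := 1 + -1) (by omega) (by omega)]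
      have h2 := hF (x + l) (-l - x) (by ring)
      push_cast
      linear_combination h2 - h1
    · rw [T_gen (i := i) (j := -1) (by omega) (by omega) (by omega), T_gen (i := 1) (j := i + -1) (by omega) (by omega) (by omega)]
      push_cast
      linear_combination -i * h1
  by_cases c4 : i + j = 0
  · rw [T_sum c4, T_right (i := 1) (by omega) c4, T_gen (i := i + 1) (j := j) (by omega) (by omega) (by omega),
      T_gen (i := 1) (j := j) (by omega) (by omega) (by omega), T_gen (i := i) (j := j + 1) (by omega) (by omega) (by omega)]
    have h2 := hF (x + l) (-l - x) (by ring)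
    obtain rfl : j = -i := by omega
    push_cast
    linear_combination i * h2
  · rw [T_gen (i := i) (j := j) (by omega) (by omega) (by omega), 
      T_gen (i := 1) (by omega) (by omega) (by omega),
      T_gen (i := i + 1) (j := j) (by omega) (by omega) (by omega),
      T_gen (i := 1) (j := j) (by omega) (by omega) (by omega), T_gen (i := i) (j := j + 1) (by omega) (by omega) (by omega)]
    push_cast
    ring

variable {S : ℤ → Prop} {P : ℤ → ℤ → ℂ[X][X]} {f g : ℂ → ℂ}

theorem T_pos (h : Sys S P) (s : ℂ) (hF : ∀ u v, u + v = 0 → g u * f v = (v - s) * (v - 2 * s))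
    (h1 : ∀ j x y, E P 1 j x y = T f g s 1 j x y) (i : ℕ) (hi : 1 ≤ i) :
    ∀ j x y, E P i j x y = T f g s i j x y := by
  induction i, hi using Nat.le_induction with
  | base => simpa using h1
  | succ i hi ih =>
    intro j x κ
    have hi1 : (1 + i : ℂ) ≠ 0 := by
      have : ((1 + i : ℕ) : ℂ) ≠ 0 := by rw [Nat.cast_ne_zero]; omega
      simpa using this
    set l : ℂ := (1 + κ - s * (1 - i)) / (1 + i) with hl
    have e : (1 + i) * l = 1 + κ - s * (1 - i) := by rw [hl]; field_simp
    have a := h.jac 1 i j (i + 1) (i + j) (j + 1) (by ring) rfl (by ring) x l (κ - l)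
    have b := T_jac f g s hF i j (by omega) x l (κ - l)
    simp only [h1, ih] at a
    rw [b, T_gen (i := 1) (by omega) (by omega) (by omega)] at a
    rw [show l + (κ - l) = κ by ring] at a
    push_cast at a ⊢
    have e3 : (1 : ℂ) * (-l - (κ - l)) + (1 + i) * l + s * (1 - i) = 1 := by rw [e]; ring
    rw [e3] at a
    linear_combination -a

theorem typeII (hh : FG P f g) (h : Sys S P) (s : ℂ) (hF : ∀ x, g (-x) * f x = (x - s) * (x - 2 * s)) :
    (∀ i, S i) ∧ ∃ c : ℤ → ℂ, (∀ i, c i ≠ 0) ∧ ∀ i j x y, E (sc c P) i j x y = T f g s i j x y := by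
  have hp : ∀ j : ℕ, ∃ k : ℂ, k ≠ 0 ∧ (1 ≤ j → (∀ x y, E P 1 j x y = k * (x + (1 + j) * y + s * (1 - j))) ∧
      (∀ x y, E P (-1) (j + 1) x y = k⁻¹ * (-x + j * y - s * (j + 2)))) := by
    intro j
    by_cases hj : 1 ≤ j
    · obtain ⟨-, k, hk, h1⟩ := hh.pos2 h s hF j hj
      exact ⟨k, hk, fun _ => h1⟩
    · exact ⟨1, one_ne_zero, fun h => absurd h hj⟩
  have hp' : ∀ j : ℕ, ∃ k : ℂ, k ≠ 0 ∧ (1 ≤ j → (∀ x y, E P (-1) (-j) x y = - k * (x + (1 + j) * y + s * (1 - j))) ∧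
      (∀ x y, E P 1 (-(j + 1)) x y = - k⁻¹ * (-x + j * y - s * (j + 2)))) := by
    intro j
    by_cases hj : 1 ≤ j
    · obtain ⟨-, k, hk, h1, h2⟩ := (hh.flip h).pos2 h.flip s hF j hj
      refine ⟨k, hk, fun _ => ⟨fun x y => ?_, fun x y => ?_⟩⟩
      · have := h1 x y
        rw [E_fl] at this
        linear_combination -this
      · have := h2 x y
        rw [E_fl, neg_neg] at this
        linear_combination -this
    · exact ⟨1, one_ne_zero, fun h => absurd h hj⟩
  choose k hk hk1 using hp
  choose k' hk' hk1' using hp'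
  have h0 : ∀ j : ℕ, 1 ≤ j → ∀ x y, E P 0 j x y = j * f y := fun j hj => (hh.pos2 h s hF j hj).1
  have h0' : ∀ j : ℕ, 1 ≤ j → ∀ x y, E P 0 (-j) x y = -j * f y := fun j hj x y => by
    have := ((hh.flip h).pos2 h.flip s hF j hj).1 x y
    rw [E_fl] at this
    simp only [neg_zero] at this
    linear_combination -this
  have hS : ∀ i, S i := by
    intro i
    by_contra hi
    have hz : ∀ j l, j + l = i → ∀ x y, E P j l x y = 0 := by
      intro j l hjl x y
      simp [E, h.zero j l (Or.inr (Or.inr (hjl ▸ hi)))]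
    by_cases c1 : 2 ≤ i
    · obtain ⟨n, rfl⟩ := Int.eq_ofNat_of_zero_le (show 0 ≤ i by omega)
      obtain ⟨n, rfl⟩ := Nat.exists_eq_add_of_le' (show 1 ≤ n by omega)
      have a := hz 1 n (by push_cast; ring) (1 - s * (1 - n)) 0
      rw [(hk1 n (by omega)).1] at a
      simp [hk n] at a
    by_cases c2 : i ≤ -2
    · obtain ⟨n, hn⟩ := Int.eq_ofNat_of_zero_le (show 0 ≤ -i by omega)
      obtain ⟨n, rfl⟩ := Nat.exists_eq_add_of_le' (show 1 ≤ n by omega)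
      have a := hz (-1) (-n) (by push_cast at hn; omega) (1 - s * (1 - n)) 0
      rw [(hk1' n (by omega)).1] at a
      simp [hk' n] at a
    · have : i = -1 ∨ i = 0 ∨ i = 1 := by omega
      rcases this with rfl | rfl | rfl
      · exact hi h.s1'
      · exact hi h.s0
      · exact hi h.s1
  refine ⟨hS, ?_⟩
  obtain ⟨c, hc, c0, c1, c1', cs, cs'⟩ := scl k k' hk hk'
  refine ⟨c, hc, ?_⟩
  have hs := h.scale c hc
  have hF' : ∀ u v, u + v = 0 → g u * f v = (v - s) * (v - 2 * s) := by
    intro u v huv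
    obtain rfl : u = -v := by linear_combination huv
    exact hF v
  have e1 : ∀ j x y, E (sc c P) 1 j x y = T f g s 1 j x y := by
    intro j x y
    rw [E_sc, c1]
    rcases lt_trichotomy j 0 with hj | rfl | hj
    · by_cases hj1 : j = -1
      · subst hj1
        rw [T_sum (by omega), hh.g' h, c1']
        simp [c0]
      · obtain ⟨n, hn⟩ := Int.eq_ofNat_of_zero_le (show 0 ≤ -j by omega)
        obtain ⟨n, rfl⟩ := Nat.exists_eq_add_of_le' (show 1 ≤ n by omega)
        obtain rfl : j = -((n : ℤ) + 1) := by push_cast at hn; omega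
        rw [T_gen (by omega) (by omega) (by omega), (hk1' n (by omega)).2, cs' n (by omega)]
        rw [show 1 + -((n : ℤ) + 1) = -n by ring]
        have := hc (-n)
        have := hk' n
        field_simp
        push_cast
        ring
    · rw [T_right (by omega) rfl, hh.f10 h, c0]
      simp [c1]
    · obtain ⟨n, rfl⟩ := Int.eq_ofNat_of_zero_le hj.le
      have hn : 1 ≤ n := by omega
      rw [T_gen (by omega) (by omega) (by omega), (hk1 n hn).1, add_comm 1 (n : ℤ), cs n hn]
      have := hc n
      have := hk n
      field_simp
      push_cast
      ring
  have e1' : ∀ j x y, E (fl (sc c P)) 1 j x y = T f g s 1 j x y := by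
    intro j x y
    rw [← T_fl, E_fl, E_sc, c1']
    congr 1
    rcases lt_trichotomy j 0 with hj | rfl | hj
    · by_cases hj1 : j = -1
      · subst hj1
        rw [T_sum (by omega), neg_neg, hh.hg, c1]
        simp [c0]
      · obtain ⟨n, hn⟩ := Int.eq_ofNat_of_zero_le (show 0 ≤ -j by omega)
        obtain ⟨n, rfl⟩ := Nat.exists_eq_add_of_le' (show 1 ≤ n by omega)
        obtain rfl : j = -((n : ℤ) + 1) := by push_cast at hn; omega
        rw [T_gen (by omega) (by omega) (by omega), neg_neg, (hk1 n (by omega)).2, cs n (by omega)]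
        rw [show -1 + ((n : ℤ) + 1) = n by ring]
        have := hc n
        have := hk n
        field_simp
        push_cast
        ring
    · rw [T_right (by omega) (by omega), h.skew, neg_zero, hh.f' h, c0]
      simp [c1']
    · obtain ⟨n, rfl⟩ := Int.eq_ofNat_of_zero_le hj.le
      have hn : 1 ≤ n := by omega
      rw [T_gen (by omega) (by omega) (by omega), (hk1' n hn).1, show -1 + -(n : ℤ) = -(n + 1) by ring, cs' n hn]
      have := hc (-n)
      have := hk' n
      field_simp
      push_cast
      ring
  intro i j x y
  rcases lt_trichotomy i 0 with hi | rfl | hi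
  · obtain ⟨n, hn⟩ := Int.eq_ofNat_of_zero_le (show 0 ≤ -i by omega)
    obtain rfl : i = -n := by omega
    have := T_pos hs.flip s hF' e1' n (by omega) (-j) x y
    rw [E_fl, ← T_fl, neg_neg] at this
    exact neg_injective this
  · rw [E_sc, c0]
    rcases lt_trichotomy j 0 with hj | rfl | hj
    · obtain ⟨n, hn⟩ := Int.eq_ofNat_of_zero_le (show 0 ≤ -j by omega)
      obtain rfl : j = -n := by omega
      rw [h0' n (by omega)]
      have := hc (-n)
      have : n ≠ 0 := by omega
      simp [T, this, hc]
    · simp [T, h.e00]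
    · obtain ⟨n, rfl⟩ := Int.eq_ofNat_of_zero_le hj.le
      rw [h0 n (by omega)]
      have : n ≠ 0 := by omega
      simp [T, this, hc]
  · obtain ⟨n, rfl⟩ := Int.eq_ofNat_of_zero_le hi.le
    exact T_pos hs s hF' e1 n (by omega) j x y

end CV

namespace CV

variable {S : ℤ → Prop} {P : ℤ → ℤ → ℂ[X][X]}

theorem ev_map (p : ℂ[X][X]) (x y : ℂ) : evalEval x y p = (p.map (evalRingHom x)).eval y := by
  rw [Polynomial.eval_map, evalEval, Polynomial.eval₂_eq_sum_range, Polynomial.eval_eq_sum_range (p := p), eval_finsetSum]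
  simp

theorem coeff_shift (B : ℂ[X]) (l : ℂ) (N : ℕ) (hN : B.natDegree ≤ N) :
    (taylor l B).coeff N = B.coeff N := by
  rcases hN.lt_or_eq with h | h
  · rw [coeff_eq_zero_of_natDegree_lt h, coeff_eq_zero_of_natDegree_lt (by rwa [natDegree_taylor])]
  · subst h
    rw [coeff_taylor_natDegree]; rfl

theorem lead_const (p r : ℂ[X][X]) (hp : p ≠ 0)
    (h : ∀ x l m, evalEval (x + l) m p * evalEval x l r = -(evalEval x (l + m) p + evalEval x m p)) :
    ∀ x l, evalEval x l r = -2 := by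
  set a := p.leadingCoeff with ha
  have ha0 : a ≠ 0 := leadingCoeff_ne_zero.2 hp
  have key : ∀ x l, a.eval (x + l) * evalEval x l r = -2 * a.eval x := by
    intro x l
    have e : (p.map (evalRingHom (x + l))) * Polynomial.C (evalEval x l r)
        = -(taylor l (p.map (evalRingHom x)) + p.map (evalRingHom x)) := by
      apply Polynomial.funext
      intro m
      have := h x l m
      rw [ev_map p, ev_map p, ev_map p] at this
      rw [eval_mul, eval_C, eval_neg, eval_add, taylor_eval, this, add_comm l m]
    have e2 := congrArg (fun q => q.coeff p.natDegree) e
    simp only [coeff_mul_C, coeff_neg, coeff_add] at e2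
    rw [coeff_shift _ _ _ (natDegree_map_le)] at e2
    simp only [coeff_map, coe_evalRingHom] at e2
    have e3 : p.coeff p.natDegree = a := rfl
    rw [e3] at e2
    linear_combination e2
  obtain ⟨x0, hx0⟩ : ∃ x0, a.eval x0 ≠ 0 := by
    by_contra hc
    push Not at hc
    exact ha0 (Polynomial.funext (by simpa using hc))
  obtain ⟨W, hW⟩ := polyLine r (Polynomial.C x0) (X - Polynomial.C x0)
  have hu : IsUnit a := by
    apply IsUnit.of_mul_eq_one (W * Polynomial.C (-2 * a.eval x0)⁻¹)
    apply Polynomial.funext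
    intro u
    have := key x0 (u - x0)
    rw [add_sub_cancel] at this
    have h2 := hW u
    simp only [eval_C, eval_sub, eval_X] at h2
    simp only [eval_mul, eval_C, eval_one]
    rw [h2, ← mul_assoc, this, mul_inv_cancel₀]
    simpa using hx0
  obtain ⟨k, hk, hka⟩ := Polynomial.isUnit_iff.1 hu
  intro x l
  have := key x l
  rw [← hka, eval_C, eval_C] at this
  apply mul_left_cancel₀ hk.ne_zero
  rw [this]; ring

theorem additive_poly (r : ℂ[X]) (h : ∀ x y, r.eval (x + y) = r.eval x + r.eval y) :
    ∀ x, r.eval x = x * r.eval 1 := by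
  have h0 : r.eval 0 = 0 := by have := h 0 0; simpa using this
  have hn : ∀ n : ℕ, r.eval (n : ℂ) = n * r.eval 1 := by
    intro n
    induction n with
    | zero => simp [h0]
    | succ n ih => push_cast; rw [h, ih]; ring
  have : r = X * Polynomial.C (r.eval 1) := by
    apply Polynomial.eq_of_infinite_eval_eq
    apply Set.Infinite.mono (s := Set.range (fun n : ℕ => (n : ℂ)))
    · rintro _ ⟨n, rfl⟩
      simp only [Set.mem_ofPred_eq, eval_mul, eval_X, eval_C]
      exact hn n
    · exact Set.infinite_range_of_injective Nat.cast_injective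
  intro x
  conv_lhs => rw [this]
  rw [eval_mul, eval_X, eval_C]

abbrev FG0 (P : ℤ → ℤ → ℂ[X][X]) : Prop := FG P (fun _ => -1) (fun _ => -1)

theorem FG0.base (hh : FG0 P) (h : Sys S P) (h2 : S 2) :
    (∀ x y, E P 0 2 x y = -2) ∧ ∃ k : ℂ, k ≠ 0 ∧ (∀ x y, E P 1 1 x y = k * (x + 2 * y)) ∧
      ∀ x y, E P (-1) 2 x y = 0 := by
  have hne : P 1 1 ≠ 0 := h.gen 1 le_rfl (by simpa using h2)
  have J : ∀ x l m, E P 1 1 (x + l) m * E P 0 2 x l = -(E P 1 1 x (l + m) + E P 1 1 x m) := by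
    intro x l m
    have := h.jac 0 1 1 1 2 1 (by norm_num) (by norm_num) (by norm_num) x l m
    rw [hh.hf, hh.hf] at this
    rw [this]; ring
  have h02 : ∀ x y, E P 0 2 x y = -2 := lead_const (P 1 1) (P 0 2) hne J
  refine ⟨h02, ?_⟩
  obtain ⟨r, hr⟩ := polyLine (P 1 1) 0 X
  have hr' : ∀ y, E P 1 1 0 y = r.eval y := by
    intro y; rw [hr y]; simp [E]
  have J2 : ∀ x l m, 2 * E P 1 1 (x + l) m = E P 1 1 x (l + m) + E P 1 1 x m := by
    intro x l m
    have := J x l m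
    rw [h02] at this
    linear_combination -this
  have q : ∀ l m, 2 * E P 1 1 l m = r.eval (l + m) + r.eval m := by
    intro l m
    have := J2 0 l m
    rwa [zero_add, hr', hr'] at this
  have r0 : r.eval 0 = 0 := by
    have := h.skew 1 1 0 0
    rw [hr'] at this
    simp only [neg_zero, sub_zero, hr'] at this
    linear_combination this / 2
  have hadd : ∀ x y, r.eval (x + y) = r.eval x + r.eval y := by
    intro x y
    have a := J2 x y 0
    have b := q (x + y) 0
    have c := q x (y + 0)
    have d := q x 0
    simp only [add_zero, r0] at a b c d
    linear_combination 2 * a - 2 * b + c + d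
  have hlin := additive_poly r hadd
  have h11 : ∀ x y, E P 1 1 x y = (r.eval 1 / 2) * (x + 2 * y) := by
    intro x y
    have := q x y
    rw [hlin (x + y), hlin y] at this
    linear_combination this / 2
  have hk : r.eval 1 / 2 ≠ 0 := by
    intro h0
    apply hne
    apply evalEval_ext
    intro x y
    have := h11 x y
    rw [h0, zero_mul] at this
    simpa [E] using this
  refine ⟨_, hk, h11, ?_⟩
  intro x y
  have := hh.k11 h x y ((1 - x - y) / 2)
  rw [h11] at this
  have e : x + y + 2 * ((1 - x - y) / 2) = 1 := by ring
  rw [e] at this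
  apply mul_left_cancel₀ hk
  linear_combination this

def u1 (j : ℤ) (x y : ℂ) : ℂ := if j = 1 then x + 2 * y else 1

theorem u1_sel (j : ℤ) (x : ℂ) : ∃ y, u1 j x y = 1 := by
  unfold u1
  split_ifs
  · exact ⟨(1 - x) / 2, by ring⟩
  · exact ⟨0, rfl⟩

theorem FG0.pos (hh : FG0 P) (h : Sys S P) (h2 : S 2) (j : ℕ) (hj : 1 ≤ j) :
    (∀ x y, E P 0 (j + 1) x y = -(j + 1)) ∧ ∃ k : ℂ, k ≠ 0 ∧ (∀ x y, E P 1 j x y = k * u1 j x y) ∧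
      ∀ x y, E P (-1) (j + 1) x y = k⁻¹ * ((j + 2) * (j - 1) / 2) := by
  induction j, hj using Nat.le_induction with
  | base =>
    obtain ⟨h0, k, hk, h1, h3⟩ := hh.base h h2
    refine ⟨?_, k, hk, ?_, ?_⟩
    · intro x y; have := h0 x y; norm_num [this]
    · intro x y; have := h1 x y; simp [this, u1]
    · intro x y; have := h3 x y; norm_num [this]
  | succ j hj ih =>
    obtain ⟨h0, k, hk, h1, h3⟩ := ih
    have hj' : (j : ℂ) ≠ 0 := by rw [Nat.cast_ne_zero]; omega
    have hj3 : (j + 3 : ℂ) ≠ 0 := by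
      have : ((j + 3 : ℕ) : ℂ) ≠ 0 := by rw [Nat.cast_ne_zero]; omega
      simpa using this
    obtain ⟨k', hk', h1', h3'⟩ := factor (P 1 (j + 1)) (P (-1) (j + 2)) (fun x m => 1)
      (fun x l => (j + 3) * j / 2) 0 0 ((j + 3) * j / 2) (div_ne_zero (mul_ne_zero hj3 hj') two_ne_zero)
      (by
        intro x m l
        have := h.jac (-1) 1 (j + 1) 0 (j + 2) j (by norm_num) (by ring) (by ring) (x - l) l m
        rw [sub_add_cancel, hh.hg, h0, h3, h1] at this
        have e := inv_mul_cancel₀ hk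
        simp only [E] at this
        rw [this]
        have e2 : ((j : ℂ) - 1) * u1 j (x - l) m = j - 1 := by
          by_cases hj1 : j = 1
          · subst hj1; simp
          · have : ¬ ((j : ℤ) = 1) := by omega
            simp [u1, this]
        linear_combination (j + 2) / 2 * (j - 1) * u1 j (x - l) m * e + (j + 2) / 2 * e2)
      (by simp) (by simp)
    have hj1 : ¬ (((j + 1 : ℕ) : ℤ) = 1) := by omega
    refine ⟨?_, k', hk', ?_, ?_⟩
    · intro x y
      have := h.jac 0 1 (j + 1) 1 (j + 2) (j + 1) (by norm_num) (by ring) (by ring) x y 0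
      have a : ∀ x y, E P 1 (j + 1) x y = k' := by intro x y; have := h1' x y; simpa [E] using this
      rw [a, hh.hf, a, h0, a] at this
      apply mul_left_cancel₀ hk'
      push_cast
      rw [show (j : ℤ) + 1 + 1 = j + 2 by ring, this]; ring
    · intro x y
      have := h1' x y
      rw [u1, if_neg hj1]
      push_cast
      simpa [E] using this
    · intro x y
      have := h3' x y
      push_cast
      rw [show (j : ℤ) + 1 + 1 = j + 2 by ring]
      simp only [E, this]
      ring

theorem Sys.noS (h : Sys S P) (h2 : ¬ S 2) (n : ℕ) (hn : 2 ≤ n) : ¬ S n := by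
  induction n, hn using Nat.le_induction with
  | base => exact_mod_cast h2
  | succ n hn ih =>
    intro hS
    exact h.gen n (by omega) (by exact_mod_cast hS) (h.zero _ _ (Or.inr (Or.inl ih)))

theorem FG0.allS (hh : FG0 P) (h : Sys S P) (h2 : S 2) (n : ℕ) : S n := by
  by_contra hc
  rcases n with _ | _ | n
  · exact hc (by simpa using h.s0)
  · exact hc (by simpa using h.s1)
  · obtain ⟨-, k, hk, h1, -⟩ := hh.pos h h2 (n + 1) (by omega)
    obtain ⟨y, hy⟩ := u1_sel (n + 1 : ℕ) 0
    have := h1 0 y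
    rw [hy, E, h.zero 1 (n + 1 : ℕ) (Or.inr (Or.inr (by push_cast at hc ⊢; rwa [show (1 : ℤ) + (n + 1) = n + 1 + 1 by ring])))] at this
    simp at this
    exact hk this.symm

structure Nm (P : ℤ → ℤ → ℂ[X][X]) : Prop where
  a : ∀ j : ℤ, 2 ≤ j → ∀ x y, E P 0 j x y = -j
  b : ∀ j : ℤ, 1 ≤ j → ∀ x y, E P 1 j x y = u1 j x y
  c : ∀ j : ℤ, 1 ≤ j → ∀ x y, E P (-1) j x y = (j + 1) * (j - 2) / 2

theorem Nm.d (hN : Nm P) (h : Sys S P) (n : ℕ) : ∀ i j : ℤ, 2 ≤ i → 2 ≤ j → i + j = n → ∀ x y, E P i j x y = 0 := by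
  induction n with
  | zero => intro i j hi hj hij; exfalso; push_cast at hij; omega
  | succ n ih =>
    intro i j hi hj hij x y
    have J := h.jac (-1) i j (i - 1) (i + j) (j - 1) (by ring) rfl (by ring) (x - 0) 0 y
    rw [sub_add_cancel, hN.c i (by omega), hN.c j (by omega), hN.c (i + j) (by omega)] at J
    have r1 : ∀ z w : ℂ, ((i : ℂ) + 1) * (i - 2) / 2 * E P (i - 1) j z w = 0 := by
      intro z w
      by_cases hi2 : i = 2
      · subst hi2; simp
      · rw [ih (i - 1) j (by omega) hj (by push_cast at hij; omega)]; ring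
    have r2 : ∀ z w : ℂ, ((j : ℂ) + 1) * (j - 2) / 2 * E P i (j - 1) z w = 0 := by
      intro z w
      by_cases hi2 : j = 2
      · subst hi2; simp
      · rw [ih i (j - 1) hi (by omega) (by push_cast at hij; omega)]; ring
    rw [r1, r2, add_zero] at J
    have n1 : ((i + j : ℤ) : ℂ) + 1 ≠ 0 := by
      have : ((i + j + 1 : ℤ) : ℂ) ≠ 0 := by rw [Int.cast_ne_zero]; omega
      simpa using this
    have n2 : ((i + j : ℤ) : ℂ) - 2 ≠ 0 := by
      have : ((i + j - 2 : ℤ) : ℂ) ≠ 0 := by rw [Int.cast_ne_zero]; omega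
      simpa using this
    rcases mul_eq_zero.1 J with h0 | h0
    · exact h0
    · exfalso
      have := mul_ne_zero n1 n2
      apply this
      linear_combination 2 * h0

@[simp] theorem ev_Pc (a x y : ℂ) : evalEval x y (Pc a) = a := by simp [Pc, evalEval]
@[simp] theorem ev_Pd (x y : ℂ) : evalEval x y Pd = x := by simp [Pd, evalEval]
@[simp] theorem ev_Pl (x y : ℂ) : evalEval x y Pl = y := by simp [Pl, evalEval]
@[simp] theorem ev_one (x y : ℂ) : evalEval x y (1 : ℂ[X][X]) = 1 := by simp [evalEval]

section vals
variable {i j : ℤ}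
theorem v1 : pM2 1 1 = Pd + Pc 2 * Pl := by simp [pM2]
theorem v2 : pM2 (-1) (-1) = Pd + Pc 2 * Pl := by simp [pM2]
theorem v3 : pM2 0 j = Pc (-(j : ℂ)) := by
  rw [pM2, if_neg (by omega), if_neg (by omega), if_pos rfl]
theorem v4 : pM2 i 0 = Pc (i : ℂ) := by
  by_cases h : i = 0
  · subst h; rw [v3]; simp
  rw [pM2, if_neg (by omega), if_neg (by omega), if_neg h, if_pos rfl]
theorem v5 (h : 1 ≤ j) : pM2 (-1) j = Pc (((j : ℂ) + 1) * ((j : ℂ) - 2) / 2) := by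
  rw [pM2, if_neg (by omega), if_neg (by omega), if_neg (by omega), if_neg (by omega), if_pos (by omega)]
theorem v6 (h : 1 ≤ i) : pM2 i (-1) = Pc (-(((i : ℂ) + 1) * ((i : ℂ) - 2) / 2)) := by
  rw [pM2, if_neg (by omega), if_neg (by omega), if_neg (by omega), if_neg (by omega), if_neg (by omega), if_pos (by omega)]
theorem v7 (h : j ≤ -2) : pM2 1 j = Pc (((j : ℂ) - 1) * ((j : ℂ) + 2) / 2) := by
  rw [pM2, if_neg (by omega), if_neg (by omega), if_neg (by omega), if_neg (by omega), if_neg (by omega),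
    if_neg (by omega), if_pos (by omega)]
theorem v8 (h : i ≤ -2) : pM2 i 1 = Pc (-(((i : ℂ) - 1) * ((i : ℂ) + 2) / 2)) := by
  rw [pM2, if_neg (by omega), if_neg (by omega), if_neg (by omega), if_neg (by omega), if_neg (by omega),
    if_neg (by omega), if_neg (by omega), if_pos (by omega)]
theorem v9 (h : j ≤ -2) : pM2 (-1) j = 1 := by
  rw [pM2, if_neg (by omega), if_neg (by omega), if_neg (by omega), if_neg (by omega), if_neg (by omega),
    if_neg (by omega), if_neg (by omega), if_neg (by omega), if_pos (by omega)]
theorem v10 (h : i ≤ -2) : pM2 i (-1) = -1 := by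
  rw [pM2, if_neg (by omega), if_neg (by omega), if_neg (by omega), if_neg (by omega), if_neg (by omega),
    if_neg (by omega), if_neg (by omega), if_neg (by omega), if_neg (by omega), if_pos (by omega)]
theorem v11 (h : 2 ≤ j) : pM2 1 j = 1 := by
  rw [pM2, if_neg (by omega), if_neg (by omega), if_neg (by omega), if_neg (by omega), if_neg (by omega),
    if_neg (by omega), if_neg (by omega), if_neg (by omega), if_neg (by omega), if_neg (by omega), if_pos (by omega)]
theorem v12 (h : 2 ≤ i) : pM2 i 1 = -1 := by
  rw [pM2, if_neg (by omega), if_neg (by omega), if_neg (by omega), if_neg (by omega), if_neg (by omega),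
    if_neg (by omega), if_neg (by omega), if_neg (by omega), if_neg (by omega), if_neg (by omega), if_neg (by omega),
    if_pos (by omega)]
theorem v13 (h : 2 ≤ i ∨ i ≤ -2) (h' : 2 ≤ j ∨ j ≤ -2) : pM2 i j = 0 := by
  rw [pM2, if_neg (by omega), if_neg (by omega), if_neg (by omega), if_neg (by omega), if_neg (by omega),
    if_neg (by omega), if_neg (by omega), if_neg (by omega), if_neg (by omega), if_neg (by omega), if_neg (by omega),
    if_neg (by omega)]
end vals

theorem Nm.target (hN : Nm P) (hh : FG0 P) (h : Sys S P) (i j : ℤ) (hi : -1 ≤ i) (hj : -1 ≤ j)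
    (hij : ¬ (i = -1 ∧ j = -1)) (x y : ℂ) : E P i j x y = evalEval x y (pM2 i j) := by
  have e0 : ∀ j : ℤ, -1 ≤ j → ∀ x y, E P 0 j x y = -j := by
    intro j hj x y
    rcases (show j = -1 ∨ j = 0 ∨ j = 1 ∨ 2 ≤ j by omega) with rfl | rfl | rfl | hj2
    · rw [hh.f' h]; simp
    · rw [h.e00]; simp
    · rw [hh.hf]; simp
    · exact hN.a j hj2 x y
  by_cases i0 : i = 0
  · subst i0; rw [e0 j hj, v3]; simp
  by_cases j0 : j = 0
  · subst j0; rw [h.skew, e0 i hi, v4]; simp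
  by_cases i1 : i = -1
  · subst i1
    rw [hN.c j (by omega), v5 (by omega)]; simp
  by_cases j1 : j = -1
  · subst j1
    rw [h.skew, hN.c i (by omega), v6 (by omega)]; simp
  by_cases i2 : i = 1
  · subst i2
    rw [hN.b j (by omega), u1]
    split_ifs with hj1
    · subst hj1; rw [v1]; simp
    · rw [v11 (by omega)]; simp
  by_cases j2 : j = 1
  · subst j2
    rw [h.skew, hN.b i (by omega), u1, if_neg i2, v12 (by omega)]; simp
  rw [hN.d h (i + j).toNat i j (by omega) (by omega) (by omega), v13 (by omega) (by omega)]
  simp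

/-- sign correction -/
def sg (i : ℤ) : ℂ := if i = 0 then 1 else -1

theorem sg_ne (i : ℤ) : sg i ≠ 0 := by unfold sg; split_ifs <;> simp

theorem sg_fl (i j : ℤ) (x y : ℂ) : E (sc sg (fl P)) i j x y
    = (if i = 0 ∨ j = 0 ∨ i + j = 0 then -1 else 1) * E P (-i) (-j) x y := by
  rw [E_sc, E_fl]
  unfold sg
  split_ifs <;> first | (exfalso; omega) | simp

theorem FG0.fl' (hh : FG0 P) (h : Sys S P) : FG0 (sc sg (fl P)) := by
  have := FG.flip hh h
  exact ⟨fun x y => by rw [E_sc, this.hf]; simp [sg], fun x y => by rw [E_sc, this.hg]; simp [sg], ⟨0, by simp⟩⟩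

theorem pM2_fl (i j : ℤ) (x y : ℂ) : evalEval x y (pM2 i j) =
    (if i = 0 ∨ j = 0 ∨ i + j = 0 then -1 else 1) * evalEval x y (pM2 (-i) (-j)) := by
  by_cases i0 : i = 0
  · subst i0
    rw [neg_zero, v3, v3, if_pos (by omega)]; simp
  by_cases j0 : j = 0
  · subst j0
    rw [neg_zero, v4, v4, if_pos (by omega)]; simp
  rcases (show i = 1 ∨ i = -1 ∨ (2 ≤ i ∨ i ≤ -2) by omega) with rfl | rfl | hi
  · rcases (show j = 1 ∨ j = -1 ∨ 2 ≤ j ∨ j ≤ -2 by omega) with rfl | rfl | hj | hj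
    · rw [v1, v2, if_neg (by omega)]; simp
    · rw [neg_neg, v6 (by omega), v5 (by omega), if_pos (by omega)]; simp
    · rw [v11 hj, v9 (by omega), if_neg (by omega)]; simp
    · rw [v7 hj, v5 (by omega), if_neg (by omega)]; simp; ring
  · rw [neg_neg]
    rcases (show j = 1 ∨ j = -1 ∨ 2 ≤ j ∨ j ≤ -2 by omega) with rfl | rfl | hj | hj
    · rw [v5 (by omega), v6 (by omega), if_pos (by omega)]; simp
    · rw [neg_neg, v1, v2, if_neg (by omega)]; simp
    · rw [v5 (by omega), v7 (by omega), if_neg (by omega)]; simp; ring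
    · rw [v9 hj, v11 (by omega), if_neg (by omega)]; simp
  · rcases (show j = 1 ∨ j = -1 ∨ (2 ≤ j ∨ j ≤ -2) by omega) with rfl | rfl | hj
    · rcases hi with hi | hi
      · rw [v12 hi, v10 (by omega), if_neg (by omega)]; simp
      · rw [v8 hi, v6 (by omega), if_neg (by omega)]; simp; ring
    · rw [neg_neg]
      rcases hi with hi | hi
      · rw [v6 (by omega), v8 (by omega), if_neg (by omega)]; simp; ring
      · rw [v10 hi, v12 (by omega), if_neg (by omega)]; simp
    · rw [v13 hi hj, v13 (by omega) (by omega)]; simp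

theorem mixed (h : Sys S P) (hh : FG0 P) (hN : Nm P) (hM : Nm (sc sg (fl P))) (n : ℕ) (hn : 2 ≤ n) :
    ∀ j : ℤ, j ≤ -2 → ∀ x y, E P n j x y = 0 := by
  have h1 : ∀ j : ℤ, j ≤ -2 → ∀ x y, E P 1 j x y = (j - 1) * (j + 2) / 2 := by
    intro j hj x y
    have := hM.c (-j) (by omega) x y
    rw [sg_fl] at this
    rw [if_neg (by omega), neg_neg, neg_neg, one_mul] at this
    rw [this]; push_cast; ring
  induction n, hn using Nat.le_induction with
  | base =>
    intro j hj x y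
    have J := h.jac 1 1 j 2 (j + 1) (j + 1) (by norm_num) (by ring) (by ring) x ((y + 1) / 2) ((y - 1) / 2)
    rw [h1 j (by omega), h1 j (by omega), hN.b 1 le_rfl] at J
    have r : ∀ l, ((j : ℂ) - 1) * (j + 2) / 2 * E P 1 (j + 1) x l = ((j : ℂ) - 1) * (j + 2) / 2 * (((j + 1 : ℤ) - 1) * ((j + 1 : ℤ) + 2) / 2) := by
      intro l
      by_cases hi2 : j = -2
      · subst hi2; simp
      · rw [h1 (j + 1) (by omega)]
    rw [r, r] at J
    simp only [u1, if_true] at J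
    rw [show (y + 1) / 2 + (y - 1) / 2 = y by ring, show -((y + 1) / 2) - (y - 1) / 2 + 2 * ((y + 1) / 2) = 1 by ring] at J
    push_cast
    linear_combination -J
  | succ n hn ih =>
    intro j hj x y
    have J := h.jac 1 n j (n + 1) (n + j) (j + 1) (by ring) (by ring) (by ring) x y 0
    have hn1 : ¬ ((n : ℤ) = 1) := by omega
    rw [ih j hj, hN.b n (by omega), u1, if_neg hn1, h1 j (by omega)] at J
    have r2 : ((j : ℂ) - 1) * (j + 2) / 2 * E P n (j + 1) x 0 = 0 := by
      by_cases hi2 : j = -2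
      · subst hi2; simp
      · rw [ih (j + 1) (by omega)]; ring
    rw [r2, add_zero y] at J
    push_cast
    linear_combination -J

theorem target2 (h : Sys S P) (hh : FG0 P) (hN : Nm P) (hM : Nm (sc sg (fl P))) (i j : ℤ) (x y : ℂ) :
    E P i j x y = evalEval x y (pM2 i j) := by
  by_cases c1 : -1 ≤ i ∧ -1 ≤ j ∧ ¬ (i = -1 ∧ j = -1)
  · exact hN.target hh h i j c1.1 c1.2.1 c1.2.2 x y
  by_cases c2 : i ≤ 1 ∧ j ≤ 1 ∧ ¬ (i = 1 ∧ j = 1)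
  · have := hM.target (hh.fl' h) (h.flip.scale sg sg_ne) (-i) (-j) (by omega) (by omega) (by omega) x y
    rw [sg_fl, pM2_fl, neg_neg, neg_neg] at this
    split_ifs at this
    · linear_combination -this
    · linear_combination this
  have z : evalEval x y (pM2 i j) = 0 := by
    rw [v13 (by omega) (by omega)]; simp
  rw [z]
  by_cases c3 : 2 ≤ i
  · have := mixed h hh hN hM i.toNat (by omega) j (by omega) x y
    rwa [show ((i.toNat : ℕ) : ℤ) = i by omega] at this
  · have := mixed h hh hN hM j.toNat (by omega) i (by omega) x (-y - x)
    rw [show ((j.toNat : ℕ) : ℤ) = j by omega] at this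
    rw [h.skew, this, neg_zero]

end CV

namespace CV

variable {L : Type} [AddCommGroup L] [Module ℂ L]

theorem sys_of (R : RankOneContext L) (hg : GenP R) (h1 : R.G 1 ≠ ⊥) (h1' : R.G (-1) ≠ ⊥) :
    Sys (fun i => R.G i ≠ ⊥) R.sp where
  jac i j k ij jk ik e1 e2 e3 x l m := by
    subst e1 e2 e3
    exact E_jac R i j k x l m
  skew i j x l := E_skew R i j x l
  zero i j hh := R.sp_zero i j (by simpa using hh)
  gen n hn hs := sp_gen R hg n hn hs
  gen' n hn hs := sp_gen (flip R) (GenP_flip R hg) n hn hs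
  z00 := by
    ext n : 1
    apply indep R 0 R.supp_zero
    have h1 := sp_eq R 0 0 n
    rw [R.abelian0 n _ (R.bas_mem 0) _ (R.bas_mem 0)] at h1
    have hm : (n.factorial : ℂ) ≠ 0 := by exact_mod_cast n.factorial_ne_zero
    exact (smul_eq_zero.1 h1.symm).resolve_left hm
  s0 := R.supp_zero
  s1 := h1
  s1' := h1'

theorem sc_sc (c c' : ℤ → ℂ) (P : ℤ → ℤ → ℂ[X][X]) : sc c' (sc c P) = sc (fun i => c' i * c i) P := by
  funext i j
  simp only [sc]
  rw [← mul_assoc, ← map_mul, ← map_mul]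
  congr 3
  ring

theorem brk (R : RankOneContext L) (c : ℤ → ℂ) (hc : ∀ i, c i ≠ 0) (i j : ℤ) (p : ℂ[X][X])
    (h : ∀ x y, E (sc c R.sp) i j x y = evalEval x y p) :
    R.toLieConformalAlgebra.BracketEq (c i • R.bas i) (c j • R.bas j) (c (i + j) • R.bas (i + j)) p := by
  have hp : sc c R.sp i j = p := evalEval_ext h
  subst hp
  intro n
  rw [applyP_eq, map_smul, map_smul, LinearMap.smul_apply, sp_eq, sc, coeff_C_mul, map_mul, aeval_C, map_smul]
  simp only [Module.End.mul_apply, Module.algebraMap_end_apply, smul_smul]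
  congr 1
  have := hc (i + j)
  field_simp

theorem FPB (R : RankOneContext L) (c : ℤ → ℂ) (hc : ∀ i, c i ≠ 0) {ι : Type} (e : ι → ℤ)
    (he : Function.Injective e) (hS : ∀ q, R.G (e q) ≠ ⊥) (hs : ∀ i, R.G i ≠ ⊥ → ∃ q, e q = i) :
    R.toLieConformalAlgebra.IsFreePolyBasis (fun q => c (e q) • R.bas (e q)) := by
  have hmem : ∀ (i : ℤ) (k : ℕ), (⇑R.D)^[k] (c i • R.bas i) ∈ R.G i := by
    intro i k
    induction k with
    | zero => exact (R.G i).smul_mem _ (R.bas_mem i)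
    | succ k ih => rw [Function.iterate_succ_apply']; exact R.dGrade i _ ih
  have hit : ∀ (i : ℤ) (k : ℕ), (⇑R.D)^[k] (c i • R.bas i) = c i • (⇑R.D)^[k] (R.bas i) := by
    intro i k
    simp only [← Module.End.pow_apply, map_smul]
  let B : ∀ i : ℤ, Module.Basis {k : ℕ // R.G i ≠ ⊥} ℂ (R.G i) := fun i =>
    Module.Basis.mk (v := fun k : {k : ℕ // R.G i ≠ ⊥} => (⟨(⇑R.D)^[k.1] (c i • R.bas i), hmem i k.1⟩ : R.G i))
      (by
        apply LinearIndependent.of_comp (R.G i).subtype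
        by_cases hi : R.G i = ⊥
        · have : IsEmpty {k : ℕ // R.G i ≠ ⊥} := ⟨fun k => k.2 hi⟩
          exact linearIndependent_empty_type
        · have h1 := (R.bas_indep i hi).units_smul (fun _ => Units.mk0 (c i) (hc i))
          have h2 := h1.comp (fun k : {k : ℕ // R.G i ≠ ⊥} => k.1) Subtype.val_injective
          convert h2 using 1
          funext k
          simp only [Function.comp, Submodule.subtype_apply, hit]
          rfl)
      (by
        intro z _
        by_cases hi : R.G i = ⊥
        · have : z = 0 := by
            apply Subtype.ext
            have : (z : L) ∈ (⊥ : Submodule ℂ L) := hi.le z.2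
            simpa using this
          rw [this]; exact Submodule.zero_mem _
        · have hz := z.2
          have key : ∀ w ∈ Submodule.span ℂ (Set.range fun k : ℕ => (⇑R.D)^[k] (R.bas i)), ∀ hw : w ∈ R.G i,
              (⟨w, hw⟩ : R.G i) ∈ Submodule.span ℂ (Set.range fun k : {k : ℕ // R.G i ≠ ⊥} => (⟨(⇑R.D)^[k.1] (c i • R.bas i), hmem i k.1⟩ : R.G i)) := by
            intro w hw hw'
            have h3 : w ∈ Submodule.map (R.G i).subtype (Submodule.span ℂ (Set.range fun k : {k : ℕ // R.G i ≠ ⊥} => (⟨(⇑R.D)^[k.1] (c i • R.bas i), hmem i k.1⟩ : R.G i))) := by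
              refine Submodule.span_le.2 ?_ hw
              rintro _ ⟨k, rfl⟩
              refine ⟨(c i)⁻¹ • ⟨(⇑R.D)^[k] (c i • R.bas i), hmem i k⟩, ?_, ?_⟩
              · exact Submodule.smul_mem _ _ (Submodule.subset_span ⟨⟨k, hi⟩, rfl⟩)
              · simp only [map_smul, Submodule.subtype_apply, hit, smul_smul, inv_mul_cancel₀ (hc i), one_smul]
            obtain ⟨w', hw1, hw2⟩ := h3
            have : w' = ⟨w, hw'⟩ := Subtype.ext hw2
            rwa [← this]
          exact key z.1 (by rw [← R.bas_span i hi]; exact hz) hz)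
  let BB := R.internal.collectedBasis B
  have hBB : ∀ a, BB a = (⇑R.D)^[a.2.1] (c a.1 • R.bas a.1) := by
    intro a
    simp only [BB, DirectSum.IsInternal.collectedBasis_coe, B, Module.Basis.mk_apply]
  let τ : ι × ℕ → (Σ i : ℤ, {k : ℕ // R.G i ≠ ⊥}) := fun q => ⟨e q.1, ⟨q.2, hS q.1⟩⟩
  have hτ : Function.Injective τ := by
    rintro ⟨q, k⟩ ⟨q', k'⟩ h
    simp only [τ, Sigma.mk.injEq] at h
    obtain ⟨h1, h2⟩ := h
    have := he h1
    subst this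
    simp at h2
    rw [h2]
  have hfam : (fun q : ι × ℕ => (⇑R.D)^[q.2] (c (e q.1) • R.bas (e q.1))) = BB ∘ τ := by
    funext q
    simp only [Function.comp, hBB, τ]
  refine ⟨?_, ?_⟩
  · change LinearIndependent ℂ (fun q : ι × ℕ => (⇑R.D)^[q.2] (c (e q.1) • R.bas (e q.1)))
    rw [hfam]
    exact BB.linearIndependent.comp τ hτ
  · change Submodule.span ℂ (Set.range (fun q : ι × ℕ => (⇑R.D)^[q.2] (c (e q.1) • R.bas (e q.1)))) = ⊤
    rw [hfam, Set.range_comp, Set.range_eq_univ.2, Set.image_univ, BB.span_eq]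
    rintro ⟨i, k, hk⟩
    obtain ⟨q, hq⟩ := hs i hk
    subst hq
    exact ⟨(q, k), rfl⟩

end CV

namespace CV

section
variable {S : ℤ → Prop} {P : ℤ → ℤ → ℂ[X][X]}

theorem ks (hh : FG0 P) (h : Sys S P) : ∃ k : ℕ → ℂ, (∀ n, k n ≠ 0) ∧ (S 2 → ∀ j : ℕ, 1 ≤ j →
    (∀ x y, E P 1 j x y = k j * u1 j x y) ∧ ∀ x y, E P (-1) (j + 1) x y = (k j)⁻¹ * ((j + 2) * (j - 1) / 2)) := by
  have hp : ∀ j : ℕ, ∃ k : ℂ, k ≠ 0 ∧ (S 2 → 1 ≤ j →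
    (∀ x y, E P 1 j x y = k * u1 j x y) ∧ ∀ x y, E P (-1) (j + 1) x y = k⁻¹ * ((j + 2) * (j - 1) / 2)) := by
    intro j
    by_cases hj : S 2 ∧ 1 ≤ j
    · obtain ⟨-, k, hk, h1⟩ := hh.pos h hj.1 j hj.2
      exact ⟨k, hk, fun _ _ => h1⟩
    · exact ⟨1, one_ne_zero, fun h1 h2 => absurd ⟨h1, h2⟩ hj⟩
  choose k hk h1 using hp
  exact ⟨k, hk, fun h2 j hj => h1 j h2 hj⟩

theorem FG0.scl (hh : FG0 P) (c : ℤ → ℂ) (h0 : c 0 = 1) (hm : c 1 * c (-1) = 1) : FG0 (sc c P) := by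
  have h1 : c 1 ≠ 0 := left_ne_zero_of_mul_eq_one hm
  refine ⟨fun x y => ?_, fun x y => ?_, ⟨0, by simp⟩⟩
  · rw [E_sc, hh.hf]; simp [h0, h1]
  · rw [E_sc, hh.hg]; simp [h0]; linear_combination hm

theorem nm_of (hh : FG0 P) (h : Sys S P) (h2 : S 2) (k : ℕ → ℂ) (hk : ∀ n, k n ≠ 0)
    (hp : ∀ j : ℕ, 1 ≤ j →
      (∀ x y, E P 1 j x y = k j * u1 j x y) ∧ ∀ x y, E P (-1) (j + 1) x y = (k j)⁻¹ * ((j + 2) * (j - 1) / 2))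
    (c : ℤ → ℂ) (hc : ∀ i, c i ≠ 0) (h0 : c 0 = 1) (hm : c 1 * c (-1) = 1)
    (hs : ∀ j : ℕ, 1 ≤ j → c (j + 1) = c 1 * c j * k j) : Nm (sc c P) where
  a j hj x y := by
    obtain ⟨n, rfl⟩ : ∃ n : ℕ, j = (n : ℤ) + 1 := ⟨(j - 1).toNat, by omega⟩
    have := (hh.pos h h2 n (by omega)).1 x y
    rw [E_sc, this, h0, zero_add, one_mul, div_self (hc _)]
    push_cast; ring
  b j hj x y := by
    obtain ⟨n, rfl⟩ : ∃ n : ℕ, j = (n : ℤ) := ⟨j.toNat, by omega⟩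
    have hn : 1 ≤ n := by omega
    rw [E_sc, (hp n hn).1, add_comm (1 : ℤ), hs n hn]
    have := hc 1
    have := hc n
    have := hk n
    field_simp
  c j hj x y := by
    obtain ⟨n, rfl⟩ : ∃ n : ℕ, j = (n : ℤ) + 1 := ⟨(j - 1).toNat, by omega⟩
    rcases Nat.eq_zero_or_pos n with rfl | hn
    · have := (hh.scl c h0 hm).hg x y
      simp only [Nat.cast_zero, zero_add]
      rw [this]; norm_num
    · rw [E_sc, (hp n hn).2, show (-1 : ℤ) + (n + 1) = n by ring, hs n hn]
      have := hc n
      have := hk n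
      push_cast
      field_simp
      linear_combination ((n : ℂ) + 2) * (n - 1) * hm

theorem norm2 (hh : FG0 P) (h : Sys S P) : ∃ c : ℤ → ℂ, (∀ i, c i ≠ 0) ∧ FG0 (sc c P) ∧
    (S 2 → Nm (sc c P)) ∧ (S (-2) → Nm (sc sg (fl (sc c P)))) := by
  obtain ⟨k, hk, hp⟩ := ks hh h
  obtain ⟨k', hk', hp'⟩ := ks (FG.flip hh h) h.flip
  obtain ⟨c, hc, c0, c1, cm, h3, h4⟩ := CV.scl k (fun n => - k' n) hk (fun n => neg_ne_zero.2 (hk' n))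
  refine ⟨c, hc, hh.scl c c0 (by rw [c1, cm, one_mul]), ?_, ?_⟩
  · intro h2
    exact nm_of hh h h2 k hk (hp h2) c hc c0 (by rw [c1, cm, one_mul]) (fun j hj => by rw [h3 j hj, c1, one_mul])
  · intro h2
    have e : sc sg (fl (sc c P)) = sc (fun i => sg i * c (-i)) (fl P) := by
      funext i j
      apply evalEval_ext
      intro x y
      change E _ i j x y = E _ i j x y
      rw [E_sc, E_fl, E_sc, E_sc, E_fl, ← neg_add]
      ring
    rw [e]
    refine nm_of (FG.flip hh h) h.flip h2 k' hk' (hp' h2) _ (fun i => mul_ne_zero (sg_ne _) (hc _)) ?_ ?_ ?_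
    · simp [sg, c0]
    · simp [sg, c1, cm]
    · intro j hj
      have a1 : sg 1 = -1 := by simp [sg]
      have a2 : sg j = -1 := by simp [sg]; omega
      have a3 : sg (j + 1) = -1 := by simp [sg]; omega
      simp only [a1, a2, a3, cm, h4 j hj]
      ring

end

variable {L : Type} [AddCommGroup L] [Module ℂ L]

theorem pM1_eq (i j : ℤ) (hi : -1 ≤ i) (hj : -1 ≤ j) (h : ¬ (i = -1 ∧ j = -1)) : pM1 i j = pM2 i j := by
  rcases (show i = -1 ∨ i = 0 ∨ i = 1 ∨ 2 ≤ i by omega) with rfl | rfl | rfl | hi2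
  · rcases (show j = 0 ∨ 1 ≤ j by omega) with rfl | hj2
    · simp [pM1, pM2]
    · have : j ≠ -1 := by omega
      have : j ≠ 0 := by omega
      simp [pM1, pM2, *]
  · have : ¬ (j = -1 ∧ (1 : ℤ) ≤ 0) := by omega
    simp [pM1, pM2]
  · rcases (show j = -1 ∨ j = 0 ∨ j = 1 ∨ 2 ≤ j by omega) with rfl | rfl | rfl | hj2
    · simp [pM1, pM2]
    · simp [pM1, pM2]
    · simp [pM1, pM2]
    · have : j ≠ -1 := by omega
      have : j ≠ 0 := by omega
      have : j ≠ 1 := by omega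
      have : ¬ j ≤ -2 := by omega
      simp [pM1, pM2, *]
  · have h1 : i ≠ -1 := by omega
    have h2 : i ≠ 0 := by omega
    have h3 : i ≠ 1 := by omega
    have h4 : ¬ i ≤ -2 := by omega
    have h5 : 1 ≤ i := by omega
    by_cases h6 : j = -1
    · subst h6; simp [pM1, pM2, h1, h2, h3, h4, h5, hi2]
    · simp [pM1, pM2, h1, h2, h3, h4, h5, h6, hi2]

theorem m2_of (R : RankOneContext L) (h : Sys (fun i => R.G i ≠ ⊥) R.sp) (c0 : ℤ → ℂ) (hc0 : ∀ i, c0 i ≠ 0)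
    (hh : FG0 (sc c0 R.sp)) (h2 : R.G 2 ≠ ⊥) (h2' : R.G (-2) ≠ ⊥) : R.toLieConformalAlgebra.IsM2 := by
  have h' := h.scale c0 hc0
  obtain ⟨c, hc, hh', hN, hM⟩ := norm2 hh h'
  have hT := target2 (h'.scale c hc) hh' (hN h2) (hM h2')
  have hcc : ∀ i, c i * c0 i ≠ 0 := fun i => mul_ne_zero (hc i) (hc0 i)
  rw [sc_sc] at hT
  have hall : ∀ i, R.G i ≠ ⊥ := by
    intro i
    rcases le_total 0 i with hi | hi
    · have := hh.allS h' h2 i.toNat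
      rwa [Int.toNat_of_nonneg hi] at this
    · have := FG0.allS (FG.flip hh h') h'.flip h2' (-i).toNat
      rwa [Int.toNat_of_nonneg (by omega), neg_neg] at this
  exact ⟨fun i => (c i * c0 i) • R.bas i, FPB R _ hcc id Function.injective_id hall (fun i _ => ⟨i, rfl⟩),
    fun i j => brk R _ hcc i j _ (hT i j)⟩

theorem m1_of (R : RankOneContext L) (h : Sys (fun i => R.G i ≠ ⊥) R.sp) (c0 : ℤ → ℂ) (hc0 : ∀ i, c0 i ≠ 0)
    (hh : FG0 (sc c0 R.sp)) (h2 : R.G 2 ≠ ⊥) (h2' : R.G (-2) = ⊥) : R.toLieConformalAlgebra.IsM1 := by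
  have h' := h.scale c0 hc0
  obtain ⟨c, hc, hh', hN, -⟩ := norm2 hh h'
  have hT := (hN h2).target hh' (h'.scale c hc)
  have hcc : ∀ i, c i * c0 i ≠ 0 := fun i => mul_ne_zero (hc i) (hc0 i)
  rw [sc_sc] at hT
  refine ⟨fun i => (c i * c0 i) • R.bas i, FPB R _ hcc (fun q : {i : ℤ // -1 ≤ i} => q.1) Subtype.val_injective ?_ ?_, ?_⟩
  · rintro ⟨i, hi⟩
    rcases (show i = -1 ∨ 0 ≤ i by omega) with rfl | hi
    · exact h.s1'
    · have := hh.allS h' h2 i.toNat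
      rwa [Int.toNat_of_nonneg hi] at this
  · intro i hi
    refine ⟨⟨i, ?_⟩, rfl⟩
    by_contra hi'
    have := h.flip.noS (by simpa using h2') (-i).toNat (by omega)
    rw [Int.toNat_of_nonneg (by omega), neg_neg] at this
    exact this hi
  · intro i j hi hj
    by_cases hij : i = -1 ∧ j = -1
    · obtain ⟨rfl, rfl⟩ := hij
      intro n
      rw [map_smul, map_smul, LinearMap.smul_apply, sp_eq, R.sp_zero (-1) (-1) (Or.inr (Or.inr (by simpa using h2'))), applyP_eq]
      simp
    · rw [if_pos (by omega), pM1_eq i j hi hj hij]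
      exact brk R _ hcc i j _ (hT i j hi hj hij)

theorem m1_of' (R : RankOneContext L) (hg : GenP R) (h : Sys (fun i => R.G i ≠ ⊥) R.sp) (c0 : ℤ → ℂ) (hc0 : ∀ i, c0 i ≠ 0)
    (hh : FG0 (sc c0 R.sp)) (h2 : R.G 2 = ⊥) (h2' : R.G (-2) ≠ ⊥) : R.toLieConformalAlgebra.IsM1 := by
  have h' := sys_of (flip R) (GenP_flip R hg) h.s1' (by simpa [flip] using h.s1)
  have e : sc (fun i => - c0 (-i)) (flip R).sp = fl (sc c0 R.sp) := by
    funext i j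
    apply evalEval_ext
    intro x y
    change E _ i j x y = E _ i j x y
    rw [E_sc, E_fl, E_sc, ← neg_add]
    change _ * E R.sp (-i) (-j) x y = _
    ring
  have := FG.flip hh (h.scale c0 hc0)
  rw [← e] at this
  exact m1_of (flip R) h' _ (fun i => neg_ne_zero.2 (hc0 _)) this h2' (by simpa [flip] using h2)

end CV

namespace CV

def cz (t w : ℂ) (i : ℤ) : ℂ := if i = 0 then t else if i = -1 then w else 1

theorem cz_ne {t w : ℂ} (ht : t ≠ 0) (hw : w ≠ 0) (i : ℤ) : cz t w i ≠ 0 := by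
  unfold cz; split_ifs <;> simp [*]

theorem FG.cz {P : ℤ → ℤ → ℂ[X][X]} {f g : ℂ → ℂ} (hh : FG P f g) (t w : ℂ) (ht : t ≠ 0) (hw : w ≠ 0) :
    FG (sc (cz t w) P) (fun x => t * f x) (fun x => w / t * g x) where
  hf x y := by rw [E_sc, hh.hf]; simp [CV.cz]
  hg x y := by rw [E_sc, hh.hg]; simp [CV.cz]
  hn := by
    obtain ⟨x, hx⟩ := hh.hn
    exact ⟨x, mul_ne_zero (div_ne_zero hw ht) hx⟩

variable {L : Type} [AddCommGroup L] [Module ℂ L]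

abbrev sl2 := ↥(LieAlgebra.SpecialLinear.sl (Fin 2) ℂ)

def en (i j : Fin 2) : sl2 →ₗ[ℂ] ℂ where
  toFun A := (A.1 : Matrix (Fin 2) (Fin 2) ℂ) i j
  map_add' _ _ := rfl
  map_smul' _ _ := rfl

theorem sl2_tr (A : sl2) : en 1 1 A = - en 0 0 A := by
  have h2 : Matrix.trace (A.1 : Matrix (Fin 2) (Fin 2) ℂ) = 0 := LinearMap.mem_ker.1 A.2
  rw [Matrix.trace_fin_two] at h2
  exact eq_neg_of_add_eq_zero_right h2

theorem en_lie (i j : Fin 2) (A B : sl2) : en i j ⁅A, B⁆ =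
    en i 0 A * en 0 j B + en i 1 A * en 1 j B - (en i 0 B * en 0 j A + en i 1 B * en 1 j A) := by
  have : en i j ⁅A, B⁆ = ((A.1 : Matrix (Fin 2) (Fin 2) ℂ) * B.1 - (B.1 : Matrix (Fin 2) (Fin 2) ℂ) * A.1) i j := rfl
  rw [this, Matrix.sub_apply, Matrix.mul_apply, Matrix.mul_apply, Fin.sum_univ_two, Fin.sum_univ_two]
  rfl

def sl2e : sl2 ≃ₗ[ℂ] (Fin 3 → ℂ) where
  toFun A := ![en 0 0 A, en 0 1 A, en 1 0 A]
  map_add' A B := by ext i; fin_cases i <;> simp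
  map_smul' c A := by ext i; fin_cases i <;> simp
  invFun u := ⟨!![u 0, u 1; u 2, - u 0], LinearMap.mem_ker.2 (by
    simp [Matrix.trace_fin_two])⟩
  left_inv A := by
    apply Subtype.ext
    have h := sl2_tr A
    refine Matrix.ext fun i j => ?_
    fin_cases i <;> fin_cases j
    · rfl
    · rfl
    · rfl
    · exact h.symm
  right_inv u := by ext i; fin_cases i <;> rfl

def phi (v : ℤ → L) : sl2 →ₗ[ℂ] L where
  toFun A := en 0 0 A • v 0 + en 0 1 A • v 1 + en 1 0 A • v (-1)
  map_add' A B := by simp only [map_add, add_smul]; abel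
  map_smul' c A := by simp [smul_add, smul_smul]

def e3 : Fin 3 → ℤ := ![0, 1, -1]

theorem phi_bij (C : LieConformalAlgebra L) (v : ℤ → L) (hv : C.IsFreePolyBasis (fun q : Fin 3 => v (e3 q))) :
    Function.Bijective (fun f : ℕ →₀ sl2 => f.sum fun k x => (⇑C.D)^[k] (phi v x)) := by
  let b : Module.Basis (Fin 3) ℂ sl2 := Module.Basis.ofEquivFun sl2e
  let B := Finsupp.basis (fun _ : ℕ => b)
  let B' := Module.Basis.mk hv.1 hv.2.ge
  let ε : (Σ _ : ℕ, Fin 3) ≃ Fin 3 × ℕ := (Equiv.sigmaEquivProd ℕ (Fin 3)).trans (Equiv.prodComm _ _)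
  let Ψ : (ℕ →₀ sl2) →ₗ[ℂ] L := Finsupp.lsum ℂ (fun k => (C.D ^ k) ∘ₗ phi v)
  have hΨ : Ψ = (B.equiv B' ε).toLinearMap := by
    apply B.ext
    rintro ⟨k, q⟩
    rw [LinearEquiv.coe_coe, Module.Basis.equiv_apply, Module.Basis.mk_apply]
    simp only [B, Finsupp.coe_basis, Ψ]
    rw [Finsupp.lsum_single, LinearMap.comp_apply, Module.End.pow_apply]
    change (⇑C.D)^[k] _ = (⇑C.D)^[k] (v (e3 q))
    congr 1
    have : sl2e (b q) = Pi.single q 1 := by simp [b]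
    have h1 := congrFun this 0
    have h2 := congrFun this 1
    have h3 := congrFun this 2
    simp only [sl2e] at h1 h2 h3
    change en 0 0 (b q) = _ at h1
    change en 0 1 (b q) = _ at h2
    change en 1 0 (b q) = _ at h3
    change en 0 0 (b q) • v 0 + en 0 1 (b q) • v 1 + en 1 0 (b q) • v (-1) = _
    rw [h1, h2, h3]
    fin_cases q <;> simp [e3]
  have : (fun f : ℕ →₀ sl2 => f.sum fun k x => (⇑C.D)^[k] (phi v x)) = Ψ := by
    funext f
    simp only [Ψ, Finsupp.lsum_apply]
    refine Finsupp.sum_congr fun k _ => ?_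
    rw [LinearMap.comp_apply, Module.End.pow_apply]
  rw [this, hΨ]
  exact (B.equiv B' ε).bijective

theorem cur_of (R : RankOneContext L) (h : Sys (fun i => R.G i ≠ ⊥) R.sp) (c : ℤ → ℂ) (hc : ∀ i, c i ≠ 0)
    (hh : FG (sc c R.sp) (fun _ => 2) (fun _ => -1)) (h2 : R.G 2 = ⊥) (h2' : R.G (-2) = ⊥) :
    R.toLieConformalAlgebra.IsCurSl2 := by
  have h' := h.scale c hc
  obtain ⟨v, hv⟩ : ∃ v : ℤ → L, ∀ i, v i = c i • R.bas i := ⟨_, fun _ => rfl⟩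
  have key : ∀ i j (a : ℂ), (∀ x y, E (sc c R.sp) i j x y = a) → ∀ n, R.prd n (v i) (v j)
      = if n = 0 then a • v (i + j) else 0 := by
    intro i j a ha n
    rw [hv, hv, hv, brk R c hc i j (Pc a) (by simpa using ha) n, applyP_eq, Pc, coeff_C]
    split_ifs with h0
    · subst h0; simp [smul_comm a]
    · simp
  have k1 := key 0 0 0 (h'.e00)
  have k2 := key 0 1 2 (hh.hf)
  have k3 := key 0 (-1) (-2) (hh.f' h')
  have k4 := key 1 0 (-2) (hh.f10 h')
  have k5 := key (-1) 0 2 (fun x y => by rw [h'.skew, hh.f' h']; simp)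
  have k6 := key (-1) 1 (-1) (hh.hg)
  have k7 := key 1 (-1) 1 (fun x y => by rw [hh.g' h']; simp)
  have k8 := key 1 1 0 (fun x y => by rw [E_sc, E, R.sp_zero 1 1 (Or.inr (Or.inr (by simpa using h2)))]; simp)
  have k9 := key (-1) (-1) 0 (fun x y => by rw [E_sc, E, R.sp_zero (-1) (-1) (Or.inr (Or.inr (by simpa using h2')))]; simp)
  have hbr : ∀ n (A B : sl2), R.prd n (phi v A) (phi v B) = if n = 0 then phi v ⁅A, B⁆ else 0 := by
    intro n A B
    change R.prd n (en 0 0 A • v 0 + en 0 1 A • v 1 + en 1 0 A • v (-1)) (en 0 0 B • v 0 + en 0 1 B • v 1 + en 1 0 B • v (-1)) =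
      if n = 0 then en 0 0 ⁅A, B⁆ • v 0 + en 0 1 ⁅A, B⁆ • v 1 + en 1 0 ⁅A, B⁆ • v (-1) else 0
    simp only [map_add, map_smul, LinearMap.add_apply, LinearMap.smul_apply]
    simp only [k1, k2, k3, k4, k5, k6, k7, k8, k9]
    split_ifs
    · simp only [en_lie, sl2_tr]
      norm_num
      module
    · simp
  have hA : Function.Injective e3 := by
    intro a b hab
    fin_cases a <;> fin_cases b <;> simp [e3] at hab ⊢
  have hB : ∀ q, R.G (e3 q) ≠ ⊥ := by
    intro q
    fin_cases q
    · exact h.s0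
    · exact h.s1
    · exact h.s1'
  have hC : ∀ i, R.G i ≠ ⊥ → ∃ q, e3 q = i := by
    intro i hi
    rcases (show i ≤ -2 ∨ i = -1 ∨ i = 0 ∨ i = 1 ∨ 2 ≤ i by omega) with h3 | rfl | rfl | rfl | h3
    · have := h.flip.noS (by simpa using h2') (-i).toNat (by omega)
      rw [Int.toNat_of_nonneg (by omega), neg_neg] at this
      exact absurd hi this
    · exact ⟨2, rfl⟩
    · exact ⟨0, rfl⟩
    · exact ⟨1, rfl⟩
    · have := h.noS (by simpa using h2) i.toNat (by omega)
      rw [Int.toNat_of_nonneg (by omega)] at this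
      exact absurd hi this
  refine ⟨phi v, phi_bij _ v (by simp only [hv]; exact FPB R c hc e3 hA hB hC), ?_, ?_⟩
  · intro A B
    have := hbr 0 A B
    rwa [if_pos rfl] at this
  · intro n hn A B
    have := hbr n A B
    rwa [if_neg (by omega)] at this

theorem typeI_of (R : RankOneContext L) (hg : GenP R) (h : Sys (fun i => R.G i ≠ ⊥) R.sp) (a b : ℂ) (ha : a ≠ 0) (hb : b ≠ 0)
    (hh : FG R.sp (fun _ => a) (fun _ => b)) : R.toLieConformalAlgebra.IsCurSl2 ∨ R.toLieConformalAlgebra.IsM1 ∨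
        R.toLieConformalAlgebra.IsM2 := by
  have t1 : -1 / a ≠ 0 := by simp [ha]
  have w1 : 1 / (a * b) ≠ 0 := by simp [ha, hb]
  have F0 := hh.cz (-1 / a) (1 / (a * b)) t1 w1
  rw [show -1 / a * a = -1 by field_simp, show 1 / (a * b) / (-1 / a) * b = -1 by field_simp] at F0
  have c1 := cz_ne t1 w1
  by_cases h2 : R.G 2 = ⊥ <;> by_cases h2' : R.G (-2) = ⊥
  · left
    have t2 : 2 / a ≠ 0 := by simp [ha]
    have w2 : -2 / (a * b) ≠ 0 := by simp [ha, hb]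
    have F2 := hh.cz (2 / a) (-2 / (a * b)) t2 w2
    rw [show 2 / a * a = 2 by field_simp, show -2 / (a * b) / (2 / a) * b = -1 by field_simp] at F2
    exact cur_of R h _ (cz_ne t2 w2) F2 h2 h2'
  · exact Or.inr (Or.inl (m1_of' R hg h _ c1 F0 h2 h2'))
  · exact Or.inr (Or.inl (m1_of R h _ c1 F0 h2 h2'))
  · exact Or.inr (Or.inr (m2_of R h _ c1 F0 h2 h2'))

theorem typeII_of (R : RankOneContext L) (h : Sys (fun i => R.G i ≠ ⊥) R.sp) (f g f' g' : ℂ → ℂ) (s t w : ℂ) (ht : t ≠ 0) (hw : w ≠ 0)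
    (hh : FG R.sp f g) (hf : ∀ x, t * f x = f' x) (hg : ∀ x, w / t * g x = g' x)
    (hF : ∀ x, g' (-x) * f' x = (x - s) * (x - 2 * s)) (p : ℤ → ℤ → ℂ[X][X])
    (hp : ∀ i j x y, T f' g' s i j x y = evalEval x y (p i j)) :
    ∃ v : ℤ → L, R.toLieConformalAlgebra.IsFreePolyBasis v ∧
    ∀ i j : ℤ, R.toLieConformalAlgebra.BracketEq (v i) (v j) (v (i + j)) (p i j) := by
  have F := hh.cz t w ht hw
  rw [funext hf, funext hg] at F
  have hc0 := cz_ne ht hw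
  obtain ⟨hS, c, hc, hT⟩ := typeII F (h.scale _ hc0) s hF
  rw [sc_sc] at hT
  have hcc : ∀ i, c i * cz t w i ≠ 0 := fun i => mul_ne_zero (hc i) (hc0 i)
  exact ⟨fun i => (c i * cz t w i) • R.bas i, FPB R _ hcc id Function.injective_id hS (fun i _ => ⟨i, rfl⟩),
    fun i j => brk R _ hcc i j _ (fun x y => by rw [hT, hp])⟩

theorem T_ECL (s : ℂ) (i j : ℤ) (x y : ℂ) :
    T (fun _ => -1) (fun x => -(x + s) * (x + 2 * s)) s i j x y = evalEval x y (pECL s i j) := by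
  unfold T pECL
  split_ifs <;> simp <;> ring

theorem T_CL3 (s : ℂ) (i j : ℤ) (x y : ℂ) :
    T (fun x => x - 2 * s) (fun x => -(x + s)) s i j x y = evalEval x y (pCL3 s i j) := by
  unfold T pCL3
  split_ifs <;> simp <;> ring

theorem T_CL2 (s : ℂ) (i j : ℤ) (x y : ℂ) :
    T (fun x => x - s) (fun x => -(x + 2 * s)) s i j x y = evalEval x y (pCL2 0 s i j) := by
  unfold T pCL2
  split_ifs with h1 h2 h3
  · obtain rfl : j = -i := by omega
    simp; ring
  · subst h2; simp; ring
  · subst h3; simp; ring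
  · simp

theorem T_SCL2 (s : ℂ) (i j : ℤ) (x y : ℂ) :
    T (fun x => -(x - s) * (x - 2 * s)) (fun _ => -1) s i j x y = evalEval x y (pSCL2 0 s i j) := by
  unfold T pSCL2 pCL2
  have e : ((i : ℂ) + j = 0) ↔ i + j = 0 := by exact_mod_cast Iff.rfl
  simp only [mul_zero, neg_zero, add_zero, Int.cast_eq_zero, e]
  by_cases h2 : i = 0
  · subst h2
    by_cases h3 : j = 0
    · subst h3; simp
    · simp [h3]; ring
  · by_cases h3 : j = 0
    · subst h3; simp [h2]; ring
    · by_cases h1 : i + j = 0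
      · simp [h1, h2, h3]
      · simp [h1, h2, h3]

end CV

namespace CV

theorem p0 (p : ℂ[X]) (h : p.natDegree = 0) (hp : p ≠ 0) : ∃ a : ℂ, a ≠ 0 ∧ ∀ x, p.eval x = a := by
  refine ⟨p.coeff 0, ?_, fun x => ?_⟩
  · have := leadingCoeff_ne_zero.2 hp
    rwa [leadingCoeff, h] at this
  · rw [eval_eq_sum_range, h]; simp

theorem p1 (p : ℂ[X]) (h : p.natDegree = 1) : ∃ a b : ℂ, a ≠ 0 ∧ ∀ x, p.eval x = a * x + b := by
  refine ⟨p.coeff 1, p.coeff 0, ?_, fun x => ?_⟩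
  · have := leadingCoeff_ne_zero.2 (ne_zero_of_natDegree_gt (n := 0) (by omega : 0 < p.natDegree))
    rwa [leadingCoeff, h] at this
  · rw [eval_eq_sum_range, h]; simp [Finset.sum_range_succ]; ring

theorem p2 (p : ℂ[X]) (h : p.natDegree = 2) : ∃ a b c : ℂ, a ≠ 0 ∧ ∀ x, p.eval x = a * x ^ 2 + b * x + c := by
  refine ⟨p.coeff 2, p.coeff 1, p.coeff 0, ?_, fun x => ?_⟩
  · have := leadingCoeff_ne_zero.2 (ne_zero_of_natDegree_gt (n := 0) (by omega : 0 < p.natDegree))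
    rwa [leadingCoeff, h] at this
  · rw [eval_eq_sum_range, h]; simp [Finset.sum_range_succ]; ring

variable {L : Type} [AddCommGroup L] [Module ℂ L]

theorem main2 (R : RankOneContext L) (h : Sys (fun i => R.G i ≠ ⊥) R.sp) (f g : ℂ[X]) (f0 : f ≠ 0) (g0 : g ≠ 0)
    (hh : FG R.sp (fun x => f.eval x) (fun x => g.eval x)) (hd : g.natDegree + f.natDegree = 2) :
    ∃ s : ℂ, R.toLieConformalAlgebra.IsECL s ∨ R.toLieConformalAlgebra.IsSCL2 0 s ∨
        R.toLieConformalAlgebra.IsCL2 0 s ∨ R.toLieConformalAlgebra.IsCL3 s := by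
  rcases (show (f.natDegree = 0 ∧ g.natDegree = 2) ∨ (f.natDegree = 1 ∧ g.natDegree = 1) ∨
    (f.natDegree = 2 ∧ g.natDegree = 0) by omega) with ⟨d1, d2⟩ | ⟨d1, d2⟩ | ⟨d1, d2⟩
  · obtain ⟨a, ha, hf⟩ := p0 f d1 f0
    obtain ⟨p, q, r, hp, hg⟩ := p2 g d2
    have hγ := hh.gamma h (a * p) (-a * q) (a * r) (by intro x; rw [hf, hg]; ring) (Or.inl (mul_ne_zero ha hp))
    have e : r = 2 * q ^ 2 / (9 * p) := by
      field_simp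
      apply mul_left_cancel₀ (pow_ne_zero 2 ha)
      linear_combination hγ
    subst e
    refine ⟨q / (3 * p), Or.inl ?_⟩
    refine typeII_of R h _ _ _ _ _ (-1 / a) (1 / (a * p)) (by simp [ha]) (by simp [ha, hp]) hh ?_ ?_ ?_ _ (T_ECL _)
    · intro x; rw [hf]; field_simp
    · intro x; rw [hg]; field_simp; ring
    · intro x; ring
  · obtain ⟨a, b, ha, hf⟩ := p1 f d1
    obtain ⟨p, q, hp, hg⟩ := p1 g d2
    have hγ := hh.gamma h (-(a * p)) (a * q - b * p) (b * q) (by intro x; rw [hf, hg]; ring) (Or.inl (neg_ne_zero.2 (mul_ne_zero ha hp)))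
    have e : (q * a + 2 * (b * p)) * (2 * (q * a) + b * p) = 0 := by linear_combination -hγ
    rcases mul_eq_zero.1 e with e | e
    · obtain rfl : q = -2 * (b * p) / a := by field_simp; linear_combination e
      refine ⟨-b / a, Or.inr (Or.inr (Or.inl ?_))⟩
      refine typeII_of R h _ _ _ _ _ (1 / a) (-1 / (a * p)) (by simp [ha]) (by simp [ha, hp]) hh ?_ ?_ ?_ _ (T_CL2 _)
      · intro x; rw [hf]; field_simp; ring
      · intro x; rw [hg]; field_simp
      · intro x; ring
    · obtain rfl : b = -2 * (q * a) / p := by field_simp; linear_combination e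
      refine ⟨q / p, Or.inr (Or.inr (Or.inr ?_))⟩
      refine typeII_of R h _ _ _ _ _ (1 / a) (-1 / (a * p)) (by simp [ha]) (by simp [ha, hp]) hh ?_ ?_ ?_ _ (T_CL3 _)
      · intro x; rw [hf]; field_simp; ring
      · intro x; rw [hg]; field_simp
      · intro x; ring
  · obtain ⟨a, b, e, ha, hf⟩ := p2 f d1
    obtain ⟨q, hq, hg⟩ := p0 g d2 g0
    have hγ := hh.gamma h (q * a) (q * b) (q * e) (by intro x; rw [hf, hg]; ring) (Or.inl (mul_ne_zero hq ha))
    obtain rfl : e = 2 * b ^ 2 / (9 * a) := by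
      field_simp
      apply mul_left_cancel₀ (pow_ne_zero 2 hq)
      linear_combination hγ
    refine ⟨-b / (3 * a), Or.inr (Or.inl ?_)⟩
    refine typeII_of R h _ _ _ _ _ (-1 / a) (1 / (a * q)) (by simp [ha]) (by simp [ha, hq]) hh ?_ ?_ ?_ _ (T_SCL2 _)
    · intro x; rw [hf]; field_simp; ring
    · intro x; rw [hg]; field_simp
    · intro x; ring

theorem main1 (R : RankOneContext L) (h : Sys (fun i => R.G i ≠ ⊥) R.sp) (f g : ℂ[X]) (f0 : f ≠ 0) (g0 : g ≠ 0)
    (hh : FG R.sp (fun x => f.eval x) (fun x => g.eval x)) : g.natDegree + f.natDegree ≠ 1 := by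
  intro hd
  rcases (show (f.natDegree = 0 ∧ g.natDegree = 1) ∨ (f.natDegree = 1 ∧ g.natDegree = 0) by omega) with ⟨d1, d2⟩ | ⟨d1, d2⟩
  · obtain ⟨a, ha, hf⟩ := p0 f d1 f0
    obtain ⟨p, q, hp, hg⟩ := p1 g d2
    have hγ := hh.gamma h 0 (-(a * p)) (a * q) (by intro x; rw [hf, hg]; ring) (Or.inr (neg_ne_zero.2 (mul_ne_zero ha hp)))
    simp [ha, hp] at hγ
  · obtain ⟨a, ha, hg⟩ := p0 g d2 g0
    obtain ⟨p, q, hp, hf⟩ := p1 f d1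
    have hγ := hh.gamma h 0 (a * p) (a * q) (by intro x; rw [hf, hg]; ring) (Or.inr (mul_ne_zero ha hp))
    simp [ha, hp] at hγ

end CV

/-- for a class `𝒱` algebra,
`deg p_{-1,1}(∂) + deg p_{0,1}(λ) ≠ 1`; if the sum is `0` then `L` is of
type I (`Cur sl(2,ℂ)`, `M(1)`, `M(2)`); if the sum is `2` then `L` is of
type II (`ECL(s)`, `SCL₂(0,s)`, `CL₂(0,s)`, `CL₃(s)`). -/
theorem classV_degree_sum_classification
    {L : Type} [AddCommGroup L] [Module ℂ L] (C : ClassV L)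
    (hmem₁ : (C.sp (-1) 1).natDegree = 0)
    (hmem₀ : ∀ n : ℕ, ((C.sp 0 1).coeff n).natDegree = 0) :
    ((C.sp (-1) 1).coeff 0).natDegree + (C.sp 0 1).natDegree ≠ 1 ∧
    (((C.sp (-1) 1).coeff 0).natDegree + (C.sp 0 1).natDegree = 0 →
      C.toLieConformalAlgebra.IsCurSl2 ∨ C.toLieConformalAlgebra.IsM1 ∨
        C.toLieConformalAlgebra.IsM2) ∧
    (((C.sp (-1) 1).coeff 0).natDegree + (C.sp 0 1).natDegree = 2 →
      ∃ s : ℂ, C.toLieConformalAlgebra.IsECL s ∨ C.toLieConformalAlgebra.IsSCL2 0 s ∨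
        C.toLieConformalAlgebra.IsCL2 0 s ∨ C.toLieConformalAlgebra.IsCL3 s) := by
  obtain ⟨f, hf⟩ : ∃ f : ℂ[X], C.sp 0 1 = f.map Polynomial.C := by
    refine ⟨(C.sp 0 1).map (evalRingHom 0), ?_⟩
    ext n : 1
    rw [coeff_map, coeff_map]
    have := eq_C_of_natDegree_eq_zero (hmem₀ n)
    rw [this]
    simp
  obtain ⟨g, hg⟩ : ∃ g : ℂ[X], C.sp (-1) 1 = Polynomial.C g := ⟨_, eq_C_of_natDegree_eq_zero hmem₁⟩
  have f0 : f ≠ 0 := by rintro rfl; exact C.ne_01 (by simpa using hf)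
  have g0 : g ≠ 0 := by rintro rfl; exact C.ne_m11 (by simpa using hg)
  have hgen : CV.GenP C.toRankOneContext := C.genV
  have hS := CV.sys_of C.toRankOneContext hgen C.supp_one C.supp_negone
  have hh : CV.FG C.sp (fun x => f.eval x) (fun x => g.eval x) := by
    refine ⟨fun x y => ?_, fun x y => ?_, ?_⟩
    · rw [CV.E, hf, CV.ev_map, Polynomial.map_map]
      have : (evalRingHom x).comp Polynomial.C = RingHom.id ℂ := RingHom.ext fun z => by simp
      rw [this, Polynomial.map_id]
    · rw [CV.E, hg, CV.ev_map]; simp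
    · by_contra hc
      push Not at hc
      exact g0 (Polynomial.funext (by simpa using hc))
  rw [hf, hg, natDegree_map_eq_of_injective C_injective, coeff_C_zero]
  refine ⟨CV.main1 _ hS f g f0 g0 hh, fun hd => ?_, fun hd => CV.main2 _ hS f g f0 g0 hh hd⟩
  obtain ⟨a, ha, ha'⟩ := CV.p0 f (by omega) f0
  obtain ⟨b, hb, hb'⟩ := CV.p0 g (by omega) g0
  simp only [ha', hb'] at hh
  exact CV.typeI_of _ hgen hS a b ha hb hh
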